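/- Let n ≥ 5, p ≥ 1 and s = n/(n−4). Let U = (u_1, …, u_p) be a nonnegative superharmonic C⁴ solution of Δ² u_i = |U|^{s−1} u_i on the punctured unit ball B₁ \ {0} ⊂ ℝ^n. If |U(x)| = o( |x|^{4−n} (−ln|x|)^{(4−n)/4} ) as x → 0 (i.e., lim_{x→0} |x|^{n−4} (−ln|x|)^{(n−4)/4} |U(x)| = 0), then the origin is a removable singularity: U extends to a continuous function on all of B₁. -/

import Mathlib

open MeasureTheory Metric Filter Topology


/-- The Euclidean Laplacian: sum of second partial derivatives. -/
noncomputable def lap {n : ℕ} (u : EuclideanSpace ℝ (Fin n) → ℝ)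
    (x : EuclideanSpace ℝ (Fin n)) : ℝ :=
  ∑ i : Fin n,
    fderiv ℝ (fun y => fderiv ℝ u y (EuclideanSpace.single i 1)) x
      (EuclideanSpace.single i 1)

/-- The bi-Laplacian Δ² = Δ ∘ Δ. -/
noncomputable def bilap {n : ℕ} (u : EuclideanSpace ℝ (Fin n) → ℝ) :
    EuclideanSpace ℝ (Fin n) → ℝ :=
  lap (lap u)

/-- The pointwise Euclidean norm |U(x)| of a p-map U. -/
noncomputable def vnorm {n p : ℕ} (U : Fin p → EuclideanSpace ℝ (Fin n) → ℝ)
    (x : EuclideanSpace ℝ (Fin n)) : ℝ :=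
  Real.sqrt (∑ i, U i x ^ 2)

namespace Serrin

variable {n : ℕ}

/-- Euclidean space shorthand. -/
abbrev E (n : ℕ) := EuclideanSpace ℝ (Fin n)

lemma lap_congr {u v : E n → ℝ} {x : E n} (h : u =ᶠ[𝓝 x] v) : lap u x = lap v x := by
  unfold lap
  refine Finset.sum_congr rfl fun i _ => ?_
  have : (fun y => fderiv ℝ u y (EuclideanSpace.single i 1)) =ᶠ[𝓝 x]
      (fun y => fderiv ℝ v y (EuclideanSpace.single i 1)) := by
    filter_upwards [h.fderiv (𝕜 := ℝ)] with y hy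
    rw [hy]
  rw [this.fderiv_eq]

lemma cd_fderiv {u : E n → ℝ} {x : E n} (h : ContDiffAt ℝ 2 u x) :
    DifferentiableAt ℝ (fderiv ℝ u) x :=
  (h.fderiv_right (m := 1) (by norm_num)).differentiableAt (by norm_num)

lemma lap_eq {u : E n → ℝ} {x : E n} (h : ContDiffAt ℝ 2 u x) :
    lap u x = ∑ i : Fin n, fderiv ℝ (fderiv ℝ u) x (EuclideanSpace.single i 1)
      (EuclideanSpace.single i 1) := by
  unfold lap
  refine Finset.sum_congr rfl fun i _ => ?_
  rw [fderiv_clm_apply (cd_fderiv h) (differentiableAt_const _)]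
  simp

lemma lap_eq_basis {u : E n → ℝ} {x : E n} (h : ContDiffAt ℝ 2 u x)
    (b : OrthonormalBasis (Fin n) ℝ (E n)) :
    lap u x = ∑ i : Fin n, fderiv ℝ (fderiv ℝ u) x (b i) (b i) := by
  have h1 := congrFun (InnerProductSpace.laplacian_eq_iteratedFDeriv_orthonormalBasis u b) x
  have h2 := congrFun (InnerProductSpace.laplacian_eq_iteratedFDeriv_orthonormalBasis u
    (EuclideanSpace.basisFun (Fin n) ℝ)) x
  rw [h1] at h2
  simp only [iteratedFDeriv_two_apply] at h2
  rw [lap_eq h]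
  simpa using h2.symm

lemma ev_diff {u : E n → ℝ} {x : E n} (h : ContDiffAt ℝ 2 u x) :
    ∀ᶠ y in 𝓝 x, DifferentiableAt ℝ u y := by
  filter_upwards [h.eventually (by simp)] with y hy
  exact hy.differentiableAt (by norm_num)

lemma lap_add {u v : E n → ℝ} {x : E n} (hu : ContDiffAt ℝ 2 u x) (hv : ContDiffAt ℝ 2 v x) :
    lap (fun y => u y + v y) x = lap u x + lap v x := by
  rw [lap_eq hu, lap_eq hv, lap_eq (hu.add hv), ← Finset.sum_add_distrib]
  refine Finset.sum_congr rfl fun i _ => ?_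
  have : fderiv ℝ (fun y => u y + v y) =ᶠ[𝓝 x] fun y => fderiv ℝ u y + fderiv ℝ v y := by
    filter_upwards [ev_diff hu, ev_diff hv] with y h1 h2
    exact fderiv_add h1 h2
  rw [this.fderiv_eq, fderiv_fun_add (cd_fderiv hu) (cd_fderiv hv)]
  simp

lemma lap_const_mul {u : E n → ℝ} {x : E n} (hu : ContDiffAt ℝ 2 u x) (c : ℝ) :
    lap (fun y => c * u y) x = c * lap u x := by
  rw [lap_eq hu, lap_eq (contDiffAt_const.mul hu), Finset.mul_sum]
  refine Finset.sum_congr rfl fun i _ => ?_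
  have : fderiv ℝ (fun y => c * u y) =ᶠ[𝓝 x] fun y => c • fderiv ℝ u y := by
    filter_upwards [ev_diff hu] with y h1
    exact fderiv_const_mul h1 c
  rw [this.fderiv_eq, fderiv_fun_const_smul (cd_fderiv hu)]
  simp

lemma lap_const (c : ℝ) (x : E n) : lap (fun _ => c) x = 0 := by
  unfold lap; simp

lemma lap_neg {u : E n → ℝ} {x : E n} (hu : ContDiffAt ℝ 2 u x) :
    lap (fun y => - u y) x = - lap u x := by
  have := lap_const_mul hu (-1)
  simpa using this

lemma lap_sub {u v : E n → ℝ} {x : E n} (hu : ContDiffAt ℝ 2 u x) (hv : ContDiffAt ℝ 2 v x) :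
    lap (fun y => u y - v y) x = lap u x - lap v x := by
  have := lap_add hu hv.neg
  rw [lap_neg hv] at this
  simpa [sub_eq_add_neg] using this

lemma lap_sum {p : ℕ} {u : Fin p → E n → ℝ} {x : E n} (hu : ∀ i, ContDiffAt ℝ 2 (u i) x) :
    lap (fun y => ∑ i, u i y) x = ∑ i, lap (u i) x := by
  induction p with
  | zero => simp [lap_const]
  | succ p ih =>
    simp only [Fin.sum_univ_succ]
    rw [lap_add (hu 0) (ContDiffAt.sum fun i _ => hu i.succ), ih fun i => hu i.succ]

lemma contDiffAt_lap {u : E n → ℝ} {x : E n} (hu : ContDiffAt ℝ 4 u x) :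
    ContDiffAt ℝ 2 (lap u) x := by
  unfold lap
  refine ContDiffAt.sum fun i _ => ?_
  have h1 : ContDiffAt ℝ 3 (fun y => fderiv ℝ u y (EuclideanSpace.single i 1)) x :=
    (hu.fderiv_right (m := 3) (by norm_num)).clm_apply contDiffAt_const
  exact (h1.fderiv_right (m := 2) (by norm_num)).clm_apply contDiffAt_const

lemma lap_nonpos_of_isLocalMax {u : E n → ℝ} {x : E n} (hu : ContDiffAt ℝ 2 u x)
    (hm : IsLocalMax u x) : lap u x ≤ 0 := by
  rw [lap_eq hu]
  refine Finset.sum_nonpos fun i _ => ?_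
  set e : E n := EuclideanSpace.single i 1
  by_contra! hpos
  -- restrict to the line
  let l : ℝ → E n := fun t => x + t • e
  have hl : ∀ t, HasDerivAt l e t := fun t => by
    have h := ((hasDerivAt_id t).smul_const e).const_add x
    rw [one_smul] at h
    exact h
  have hlc : ContinuousAt l 0 := (hl 0).continuousAt
  have hl0 : l 0 = x := by simp [l]
  have htend : Tendsto l (𝓝 0) (𝓝 x) := by simpa [hl0] using hlc.tendsto
  have hd1 : ∀ᶠ t in 𝓝 (0 : ℝ), deriv (u ∘ l) t = fderiv ℝ u (l t) e := by
    filter_upwards [htend.eventually (ev_diff hu)] with t ht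
    exact (ht.hasFDerivAt.comp_hasDerivAt t (hl t)).deriv
  have hd2 : deriv (deriv (u ∘ l)) 0 = fderiv ℝ (fderiv ℝ u) x e e := by
    rw [Filter.EventuallyEq.deriv_eq hd1]
    have h2 : HasFDerivAt (fderiv ℝ u) (fderiv ℝ (fderiv ℝ u) x) (l 0) := by
      rw [hl0]; exact (cd_fderiv hu).hasFDerivAt
    have h3 := (h2.comp_hasDerivAt 0 (hl 0))
    have h4 := h3.clm_apply (hasDerivAt_const (0:ℝ) e)
    simpa using h4.deriv
  have hmax : IsLocalMax (u ∘ l) 0 := by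
    have : ∀ᶠ y in 𝓝 x, u y ≤ u x := hm
    filter_upwards [htend.eventually this] with t ht
    simpa [hl0] using ht
  have hcont : ContinuousAt (u ∘ l) 0 := by
    refine ContinuousAt.comp ?_ hlc
    rw [hl0]; exact hu.continuousAt
  have hmin : IsLocalMin (u ∘ l) 0 :=
    isLocalMin_of_deriv_deriv_pos (by rw [hd2]; exact hpos) hmax.deriv_eq_zero hcont
  have hconst : (u ∘ l) =ᶠ[𝓝 0] fun _ => (u ∘ l) 0 := by
    filter_upwards [hmax, hmin] with t h1 h2
    exact le_antisymm h1 h2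
  have := hconst.deriv.deriv_eq
  rw [hd2] at this
  simp at this
  linarith

lemma lap_comp_isometry {v : E n → ℝ} (A : E n ≃ₗᵢ[ℝ] E n) (c x : E n)
    (hv : ContDiffAt ℝ 2 v (A x + c)) :
    ContDiffAt ℝ 2 (fun y => v (A y + c)) x ∧
    lap (fun y => v (A y + c)) x = lap v (A x + c) := by
  have hσ : ∀ y, HasFDerivAt (fun y => A y + c) (A.toContinuousLinearEquiv : E n →L[ℝ] E n) y :=
    fun y => (A.toContinuousLinearEquiv.hasFDerivAt).add_const c
  have hcd : ContDiffAt ℝ 2 (fun y => v (A y + c)) x := by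
    refine ContDiffAt.comp x (g := v) (f := fun y => A y + c) hv ?_
    exact (A.contDiff.contDiffAt).add contDiffAt_const
  refine ⟨hcd, ?_⟩
  rw [lap_eq hcd, lap_eq_basis hv ((EuclideanSpace.basisFun (Fin n) ℝ).map A)]
  refine Finset.sum_congr rfl fun i _ => ?_
  have htend : Tendsto (fun y => A y + c) (𝓝 x) (𝓝 (A x + c)) := (hσ x).continuousAt
  have h1 : fderiv ℝ (fun y => v (A y + c)) =ᶠ[𝓝 x]
      fun y => (fderiv ℝ v (A y + c)).comp (A.toContinuousLinearEquiv : E n →L[ℝ] E n) := by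
    filter_upwards [htend.eventually (ev_diff hv)] with y hy
    exact (hy.hasFDerivAt.comp y (hσ y)).fderiv
  rw [h1.fderiv_eq]
  have h2 : HasFDerivAt (fun y => fderiv ℝ v (A y + c))
      ((fderiv ℝ (fderiv ℝ v) (A x + c)).comp (A.toContinuousLinearEquiv : E n →L[ℝ] E n)) x :=
    ((cd_fderiv hv).hasFDerivAt).comp x (hσ x)
  have h3 := h2.clm_comp (hasFDerivAt_const (A.toContinuousLinearEquiv : E n →L[ℝ] E n) x)
  rw [h3.fderiv]
  simp

lemma fderiv_norm_sq_single (y : E n) :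
    HasFDerivAt (fun y : E n => ‖y‖ ^ 2) (2 • innerSL ℝ y) y :=
  (hasStrictFDerivAt_norm_sq y).hasFDerivAt

lemma lap_radial {F F' : ℝ → ℝ} {F'' : ℝ} {x : E n}
    (h1 : ∀ᶠ r in 𝓝 (‖x‖ ^ 2), HasDerivAt F (F' r) r)
    (h2 : HasDerivAt F' F'' (‖x‖ ^ 2)) :
    lap (fun y => F (‖y‖ ^ 2)) x = 4 * ‖x‖ ^ 2 * F'' + 2 * n * F' (‖x‖ ^ 2) := by
  unfold lap
  have hc : ContinuousAt (fun y : E n => ‖y‖ ^ 2) x := by fun_prop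
  have key : ∀ i : Fin n, fderiv ℝ (fun y => fderiv ℝ (fun y : E n => F (‖y‖ ^ 2)) y
      (EuclideanSpace.single i 1)) x (EuclideanSpace.single i 1)
      = 4 * F'' * (x i) ^ 2 + 2 * F' (‖x‖ ^ 2) := by
    intro i
    have e1 : (fun y => fderiv ℝ (fun y : E n => F (‖y‖ ^ 2)) y (EuclideanSpace.single i 1))
        =ᶠ[𝓝 x] fun y => F' (‖y‖ ^ 2) * (2 * y i) := by
      filter_upwards [hc.eventually h1] with y hy
      have := hy.comp_hasFDerivAt y (fderiv_norm_sq_single y)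
      have h := this.fderiv
      simp only [Function.comp_def] at h
      rw [h]
      simp [EuclideanSpace.inner_single_right]
    rw [e1.fderiv_eq]
    have e2 : HasFDerivAt (fun y : E n => F' (‖y‖ ^ 2)) (F'' • (2 • innerSL ℝ x)) x :=
      h2.comp_hasFDerivAt x (fderiv_norm_sq_single x)
    have e3 : HasFDerivAt (fun y : E n => y i) (EuclideanSpace.proj i : E n →L[ℝ] ℝ) x :=
      (EuclideanSpace.proj i : E n →L[ℝ] ℝ).hasFDerivAt
    have e4 := e2.fun_mul (e3.const_mul 2)
    rw [e4.fderiv]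
    simp [EuclideanSpace.inner_single_right]
    ring
  rw [Finset.sum_congr rfl fun i _ => key i, Finset.sum_add_distrib, ← Finset.mul_sum,
    ← EuclideanSpace.real_norm_sq_eq]
  simp
  ring

lemma lap_normsq_sub (m x : E n) : ContDiffAt ℝ 2 (fun y : E n => ‖y - m‖ ^ 2) x ∧
    lap (fun y : E n => ‖y - m‖ ^ 2) x = 2 * n := by
  have h0 : ContDiffAt ℝ 2 (fun y : E n => ‖y‖ ^ 2) (LinearIsometryEquiv.refl ℝ (E n) x + -m) :=
    (contDiff_norm_sq ℝ).contDiffAt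
  obtain ⟨h1, h2⟩ := lap_comp_isometry (LinearIsometryEquiv.refl ℝ (E n)) (-m) x h0
  simp only [LinearIsometryEquiv.coe_refl, id, ← sub_eq_add_neg] at h1 h2
  refine ⟨h1, ?_⟩
  rw [h2]
  have := lap_radial (F := id) (F' := fun _ => 1) (F'' := 0) (x := x - m)
    (Eventually.of_forall fun r => hasDerivAt_id r) (hasDerivAt_const _ _)
  simpa using this

lemma lap_inner (e m x : E n) : ContDiffAt ℝ 2 (fun y : E n => inner ℝ e (y - m)) x ∧
    lap (fun y : E n => inner ℝ e (y - m)) x = 0 := by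
  constructor
  · exact contDiffAt_const.inner ℝ (contDiffAt_id.sub contDiffAt_const)
  · unfold lap
    have : ∀ y : E n, fderiv ℝ (fun y : E n => inner ℝ e (y - m)) y = innerSL ℝ e := by
      intro y
      have h := (innerSL ℝ e).hasFDerivAt.comp y ((hasFDerivAt_id y).sub_const m)
      exact h.fderiv
    simp [this]

lemma lap_inner_sq (e m x : E n) (he : ‖e‖ = 1) :
    ContDiffAt ℝ 2 (fun y : E n => inner ℝ e (y - m) ^ 2) x ∧
    lap (fun y : E n => inner ℝ e (y - m) ^ 2) x = 2 := by
  constructor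
  · exact (lap_inner e m x).1.pow 2
  · unfold lap
    have h1 : ∀ y : E n, HasFDerivAt (fun y : E n => inner ℝ e (y - m)) (innerSL ℝ e) y := by
      intro y
      exact (innerSL ℝ e).hasFDerivAt.comp y ((hasFDerivAt_id y).sub_const m)
    have h2 : ∀ y : E n, fderiv ℝ (fun y : E n => inner ℝ e (y - m) ^ 2) y
        = (2 * inner ℝ e (y - m)) • innerSL ℝ e := by
      intro y
      have := ((h1 y).pow 2).fderiv
      simpa using this
    have h3 : ∀ i : Fin n, fderiv ℝ (fun y => fderiv ℝ (fun y : E n => inner ℝ e (y - m) ^ 2) y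
      (EuclideanSpace.single i 1)) x (EuclideanSpace.single i 1) = 2 * (e i) ^ 2 := by
      intro i
      simp only [h2]
      have h4 : HasFDerivAt (fun y : E n => ((2 * inner ℝ e (y - m)) • innerSL ℝ e)
          (EuclideanSpace.single i (1:ℝ))) ((2 * e i) • innerSL ℝ e) x := by
        have := ((h1 x).const_mul 2).mul_const (e i)
        have e1 : (fun y : E n => ((2 * inner ℝ e (y - m)) • innerSL ℝ e)
          (EuclideanSpace.single i (1:ℝ))) = fun y => 2 * inner ℝ e (y - m) * e i := by
          ext y; simp [EuclideanSpace.inner_single_right]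
        have e2 : ((2 * e i) • innerSL ℝ e : E n →L[ℝ] ℝ) = e i • (2:ℝ) • innerSL ℝ e := by
          rw [smul_smul, mul_comm]
        rw [e1, e2]
        simpa using this
      rw [h4.fderiv]
      simp [EuclideanSpace.inner_single_right]
      ring
    rw [Finset.sum_congr rfl fun i _ => h3 i, ← Finset.mul_sum,
      ← EuclideanSpace.real_norm_sq_eq, he]
    norm_num

lemma contDiffAt_normsq_rpow (a : ℝ) {x : E n} (hx : x ≠ 0) :
    ContDiffAt ℝ 2 (fun y : E n => (‖y‖ ^ 2) ^ a) x := by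
  have : (‖x‖ ^ 2) ≠ 0 := by positivity
  exact (contDiff_norm_sq ℝ).contDiffAt.rpow_const_of_ne this

lemma lap_pow (a : ℝ) {x : E n} (hx : x ≠ 0) :
    lap (fun y : E n => (‖y‖ ^ 2) ^ a) x
      = 2 * a * (2 * a - 2 + n) * (‖x‖ ^ 2) ^ (a - 1) := by
  have hpos : 0 < ‖x‖ ^ 2 := by positivity
  have h := lap_radial (x := x) (F := fun r => r ^ a) (F' := fun r => a * r ^ (a - 1))
    (F'' := a * ((a - 1) * (‖x‖ ^ 2) ^ (a - 1 - 1)))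
    (by
      filter_upwards [lt_mem_nhds hpos] with r hr
      exact Real.hasDerivAt_rpow_const (Or.inl hr.ne'))
    ((Real.hasDerivAt_rpow_const (Or.inl hpos.ne')).const_mul a)
  rw [h, Real.rpow_sub_one hpos.ne' (a - 1)]
  field_simp
  ring

/-- Log barrier profile. -/
noncomputable def G (a b : ℝ) (r : ℝ) : ℝ := r ^ a * (-Real.log r) ^ b

lemma G_pos (a b : ℝ) {r : ℝ} (h0 : 0 < r) (h1 : r < 1) : 0 < G a b r := by
  unfold G
  have : 0 < -Real.log r := by linarith [Real.log_neg h0 h1]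
  positivity

lemma hasDerivAt_G (a b : ℝ) {r : ℝ} (h0 : 0 < r) (h1 : r < 1) :
    HasDerivAt (G a b) (a * G (a - 1) b r - b * G (a - 1) (b - 1) r) r := by
  have hl : 0 < -Real.log r := by linarith [Real.log_neg h0 h1]
  have e1 : HasDerivAt (fun r : ℝ => r ^ a) (a * r ^ (a - 1)) r :=
    Real.hasDerivAt_rpow_const (Or.inl h0.ne')
  have e2 : HasDerivAt (fun r : ℝ => (-Real.log r) ^ b) _ r :=
    (Real.hasDerivAt_log h0.ne').neg.rpow_const (p := b) (Or.inl hl.ne')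
  have e3 := e1.fun_mul e2
  refine HasDerivAt.congr_deriv (f := G a b) e3 ?_
  unfold G
  rw [Real.rpow_sub_one h0.ne']
  simp only [Pi.neg_apply]
  field_simp
  ring

lemma contDiffAt_G (a b : ℝ) {x : E n} (hx : x ≠ 0) (h1 : ‖x‖ < 1) :
    ContDiffAt ℝ 2 (fun y : E n => G a b (‖y‖ ^ 2)) x := by
  have hpos : 0 < ‖x‖ ^ 2 := by positivity
  have hlt : ‖x‖ ^ 2 < 1 := by nlinarith [norm_nonneg x]
  have hl : 0 < -Real.log (‖x‖ ^ 2) := by linarith [Real.log_neg hpos hlt]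
  unfold G
  refine (contDiffAt_normsq_rpow a hx).mul ?_
  refine ContDiffAt.rpow_const_of_ne ?_ hl.ne'
  exact ((contDiff_norm_sq ℝ).contDiffAt.log hpos.ne').neg

lemma lap_G (a b : ℝ) {x : E n} (hx : x ≠ 0) (h1 : ‖x‖ < 1) :
    lap (fun y : E n => G a b (‖y‖ ^ 2)) x
      = G (a - 1) b (‖x‖ ^ 2) * (2 * a * (2 * a - 2 + n)
        - 2 * b * (4 * a - 2 + n) / (-Real.log (‖x‖ ^ 2))
        + 4 * b * (b - 1) / (-Real.log (‖x‖ ^ 2)) ^ 2) := by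
  have hpos : 0 < ‖x‖ ^ 2 := by positivity
  have hlt : ‖x‖ ^ 2 < 1 := by nlinarith [norm_nonneg x]
  have hl : 0 < -Real.log (‖x‖ ^ 2) := by linarith [Real.log_neg hpos hlt]
  have h := lap_radial (x := x) (F := G a b)
    (F' := fun r => a * G (a - 1) b r - b * G (a - 1) (b - 1) r)
    (by
      filter_upwards [lt_mem_nhds hpos, gt_mem_nhds hlt] with r hr hr1
      exact hasDerivAt_G a b hr hr1)
    (((hasDerivAt_G (a - 1) b hpos hlt).const_mul a).sub
      ((hasDerivAt_G (a - 1) (b - 1) hpos hlt).const_mul b))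
  rw [h]
  generalize ‖x‖ ^ 2 = r at *
  unfold G
  rw [Real.rpow_sub_one hpos.ne' (a - 1), Real.rpow_sub_one hl.ne' (b - 1),
    Real.rpow_sub_one hl.ne' b]
  generalize -Real.log r = t at *
  field_simp
  ring

end Serrin

namespace Serrin

variable {n : ℕ}

/-- Fundamental solution. -/
noncomputable def fs (y : E n) : ℝ := (‖y‖ ^ 2) ^ ((2 - (n : ℝ)) / 2)

lemma fs_nonneg (y : E n) : 0 ≤ fs y := by unfold fs; positivity

lemma fs_cd {x : E n} (hx : x ≠ 0) : ContDiffAt ℝ 2 (fs : E n → ℝ) x :=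
  contDiffAt_normsq_rpow _ hx

lemma fs_lap {x : E n} (hx : x ≠ 0) : lap (fs : E n → ℝ) x = 0 := by
  have := lap_pow ((2 - (n : ℝ)) / 2) hx
  unfold fs
  rw [this]
  ring

lemma normsq_rpow (x : E n) (a : ℝ) : (‖x‖ ^ 2) ^ a = ‖x‖ ^ (2 * a) := by
  rw [Real.rpow_mul (norm_nonneg x)]
  norm_num

lemma fs_eq (x : E n) : fs x = ‖x‖ ^ (2 - (n : ℝ)) := by
  unfold fs; rw [normsq_rpow]; congr 1; ring

lemma fs_ge (hn : 5 ≤ n) {x : E n} (hx : x ≠ 0) (h1 : ‖x‖ ≤ 1) : ‖x‖⁻¹ ≤ fs x := by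
  rw [fs_eq, ← Real.rpow_neg_one]
  apply Real.rpow_le_rpow_of_exponent_ge (by positivity) h1
  have : (5 : ℝ) ≤ n := by exact_mod_cast hn
  linarith

/-- Gradient-type estimate via reflection. -/
lemma lip (hn : 5 ≤ n) {v : E n → ℝ} {m e : E n} {r N F τ : ℝ} (hr : 0 < r)
    (he : ‖e‖ = 1) (hτ0 : 0 ≤ τ) (hτ : τ ≤ r)
    (hN : 0 ≤ N) (hF : 0 ≤ F)
    (hv : ∀ z ∈ closedBall m r, z ≠ 0 → ContDiffAt ℝ 2 v z)
    (hb : ∀ z ∈ closedBall m r, z ≠ 0 → 0 ≤ v z ∧ v z ≤ N)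
    (hl : ∀ z ∈ closedBall m r, z ≠ 0 → |lap v z| < F)
    (hx0 : m + τ • e ≠ 0) (hy0 : m - τ • e ≠ 0) :
    v (m + τ • e) - v (m - τ • e) ≤ ((n + 1) * N / r + F * r) * τ := by
  set x := m + τ • e with hx
  set y := m - τ • e with hy
  set A := (ℝ ∙ e)ᗮ.reflection with hA
  set c := m - A m with hc
  have hσ : ∀ z, A z + c = m + A (z - m) := by intro z; rw [hc, map_sub]; abel
  have hσn : ∀ z, ‖A z + c - m‖ = ‖z - m‖ := by
    intro z; rw [hσ, add_sub_cancel_left, A.norm_map]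
  have hAform : ∀ z, A z = z - (2 * inner ℝ e z) • e := by
    intro z
    rw [hA, Submodule.reflection_orthogonal_apply, Submodule.reflection_singleton_apply, he]
    simp [two_smul, mul_smul]
  have hσform : ∀ z, A z + c = z - (2 * inner ℝ e (z - m)) • e := by
    intro z; rw [hσ, hAform]; abel
  have hσx : A x + c = y := by
    rw [hσform, hx, hy]; simp [inner_smul_right, he]; module
  set K := N / r ^ 2 with hK
  set B := n * K + F with hB
  have hK0 : 0 ≤ K := by positivity
  have hB0 : 0 ≤ B := by positivity
  let h : E n → ℝ := fun z => B * r * inner ℝ e (z - m) - B * inner ℝ e (z - m) ^ 2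
    + K * ‖z - m‖ ^ 2
  have hcdh : ∀ z, ContDiffAt ℝ 2 h z := fun z =>
    ((contDiffAt_const.mul (lap_inner e m z).1).sub
      (contDiffAt_const.mul (lap_inner_sq e m z he).1)).add
      (contDiffAt_const.mul (lap_normsq_sub m z).1)
  have hlaph : ∀ z, lap h z = - 2 * F := by
    intro z
    have a1 := (lap_inner e m z).1
    have a2 := (lap_inner_sq e m z he).1
    have a3 := (lap_normsq_sub m z).1
    simp only [h]
    rw [lap_add ((contDiffAt_const.mul a1).sub (contDiffAt_const.mul a2))
      (contDiffAt_const.mul a3), lap_sub (contDiffAt_const.mul a1) (contDiffAt_const.mul a2),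
      lap_const_mul a1, lap_const_mul a2, lap_const_mul a3, (lap_inner e m z).2,
      (lap_inner_sq e m z he).2, (lap_normsq_sub m z).2, hB]
    ring
  have hinner_le : ∀ z, inner ℝ e (z - m) ≤ ‖z - m‖ := by
    intro z
    have := real_inner_le_norm e (z - m)
    rwa [he, one_mul] at this
  have hh0 : ∀ z ∈ closedBall m r, 0 ≤ inner ℝ e (z - m) → K * ‖z - m‖ ^ 2 ≤ h z := by
    intro z hz hi
    have h1 : ‖z - m‖ ≤ r := by simpa [dist_eq_norm] using hz
    have h2 := hinner_le z
    simp only [h]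
    have : 0 ≤ B * (inner ℝ e (z - m) * (r - inner ℝ e (z - m))) :=
      mul_nonneg hB0 (mul_nonneg hi (by linarith))
    nlinarith
  have key : ∀ δ > 0, v x - v y - δ * (fs x + fs y) ≤ h x := by
    intro δ hδ
    let q : E n → ℝ := fun z => (v z - δ * fs z) - (v (A z + c) + δ * fs (A z + c)) - h z
    suffices hq : q x ≤ 0 by
      simp only [q, hσx] at hq
      linarith
    by_contra! hqx
    set ρ := min (min ‖x‖ ‖y‖) (min 1 (δ / (N + 1))) with hρ
    have hρ0 : 0 < ρ := by
      have := norm_pos_iff.2 hx0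
      have := norm_pos_iff.2 hy0
      simp only [hρ, lt_min_iff]
      refine ⟨⟨by assumption, by assumption⟩, one_pos, by positivity⟩
    have hρx : ρ ≤ ‖x‖ := (min_le_left _ _).trans (min_le_left _ _)
    have hρy : ρ ≤ ‖y‖ := (min_le_left _ _).trans (min_le_right _ _)
    have hρ1 : ρ ≤ 1 := (min_le_right _ _).trans (min_le_left _ _)
    have hρ2 : ρ ≤ δ / (N + 1) := (min_le_right _ _).trans (min_le_right _ _)
    have hbig : ∀ z : E n, ‖z‖ = ρ → N ≤ δ * fs z := by
      intro z hz
      have hz0 : z ≠ 0 := by rw [← norm_pos_iff, hz]; exact hρ0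
      have h1 := fs_ge hn hz0 (by rw [hz]; exact hρ1)
      rw [hz] at h1
      have h2 : (N + 1) ≤ δ * ρ⁻¹ := by
        rw [le_div_iff₀ (by positivity)] at hρ2
        rw [← div_eq_mul_inv, le_div_iff₀ hρ0]
        linarith
      have := mul_le_mul_of_nonneg_left h1 hδ.le
      linarith
    let D : Set (E n) := closedBall m r ∩ {z | 0 ≤ inner ℝ e (z - m) ∧ ρ ≤ ‖z‖ ∧ ρ ≤ ‖A z + c‖}
    have hDc : IsCompact D := by
      refine (isCompact_closedBall m r).inter_right ?_
      refine IsClosed.inter ?_ (IsClosed.inter ?_ ?_)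
      · exact isClosed_le continuous_const (show Continuous fun w => inner ℝ e (w - m) by fun_prop)
      · exact isClosed_le continuous_const continuous_norm
      · exact isClosed_le continuous_const ((A.continuous.add continuous_const).norm)
    have hσball : ∀ z ∈ closedBall m r, A z + c ∈ closedBall m r := by
      intro z hz
      rw [mem_closedBall, dist_eq_norm, hσn, ← dist_eq_norm]; exact hz
    have hne : ∀ z : E n, ρ ≤ ‖z‖ → z ≠ 0 := by
      intro z hz h0; rw [h0, norm_zero] at hz; linarith
    have hcdq : ∀ z ∈ D, ContDiffAt ℝ 2 q z ∧ lap q z > 0 := by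
      rintro z ⟨hz, hi, hz1, hz2⟩
      have z0 := hne z hz1
      have sz0 := hne _ hz2
      have c1 := hv z hz z0
      have c2 := fs_cd z0
      have c3 := lap_comp_isometry A c z (hv _ (hσball z hz) sz0)
      have c4 := lap_comp_isometry A c z (fs_cd sz0)
      have d1 : ContDiffAt ℝ 2 (fun z => v z - δ * fs z) z := c1.sub (contDiffAt_const.mul c2)
      have d2 : ContDiffAt ℝ 2 (fun z => v (A z + c) + δ * fs (A z + c)) z :=
        c3.1.add (contDiffAt_const.mul c4.1)
      refine ⟨(d1.sub d2).sub (hcdh z), ?_⟩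
      simp only [q]
      rw [lap_sub (d1.sub d2) (hcdh z), lap_sub d1 d2, lap_sub c1 (contDiffAt_const.mul c2),
        lap_add c3.1 (contDiffAt_const.mul c4.1), lap_const_mul c2, lap_const_mul c4.1, c3.2, c4.2,
        fs_lap z0, fs_lap sz0, hlaph]
      have e1 := abs_lt.1 (hl z hz z0)
      have e2 := abs_lt.1 (hl _ (hσball z hz) sz0)
      linarith [e1.1, e2.2]
    have hxD : x ∈ D := by
      refine ⟨?_, ?_, hρx, ?_⟩
      · rw [mem_closedBall, dist_eq_norm, hx]; simp [norm_smul, he, abs_of_nonneg hτ0, hτ]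
      · rw [hx]; simp [inner_smul_right, he, hτ0]
      · rw [hσx]; exact hρy
    obtain ⟨z, hzD, hzmax⟩ := hDc.exists_isMaxOn ⟨x, hxD⟩
      (fun z hz => (hcdq z hz).1.continuousAt.continuousWithinAt)
    have hqz : 0 < q z := lt_of_lt_of_le hqx (hzmax hxD)
    obtain ⟨hz, hi, hz1, hz2⟩ := hzD
    have z0 := hne z hz1
    have sz0 := hne _ hz2
    have hvz := hb z hz z0
    have hvs := hb _ (hσball z hz) sz0
    have hhz := hh0 z hz hi
    have hKz : 0 ≤ K * ‖z - m‖ ^ 2 := by positivity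
    have f1 := mul_nonneg hδ.le (fs_nonneg z)
    have f2 := mul_nonneg hδ.le (fs_nonneg (A z + c))
    have s1 : ρ < ‖z‖ := by
      rcases hz1.lt_or_eq with h' | h'
      · exact h'
      · have := hbig z h'.symm
        simp only [q] at hqz
        linarith
    have s2 : ρ < ‖A z + c‖ := by
      rcases hz2.lt_or_eq with h' | h'
      · exact h'
      · have := hbig _ h'.symm
        simp only [q] at hqz
        linarith
    have s3 : 0 < inner ℝ e (z - m) := by
      rcases hi.lt_or_eq with h' | h'
      · exact h'
      · have : A z + c = z := by rw [hσform, ← h']; simp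
        simp only [q, this] at hqz
        linarith
    have s4 : ‖z - m‖ < r := by
      have : ‖z - m‖ ≤ r := by simpa [dist_eq_norm] using hz
      rcases this.lt_or_eq with h' | h'
      · exact h'
      · have : K * ‖z - m‖ ^ 2 = N := by rw [h', hK]; field_simp
        simp only [q] at hqz
        linarith
    have hloc : IsLocalMax q z := by
      have o1 : ∀ᶠ w in 𝓝 z, ρ < ‖w‖ := continuous_norm.continuousAt.eventually (lt_mem_nhds s1)
      have o2 : ∀ᶠ w in 𝓝 z, ρ < ‖A w + c‖ :=
        ((A.continuous.add continuous_const).norm).continuousAt.eventually (lt_mem_nhds s2)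
      have o3 : ∀ᶠ w in 𝓝 z, 0 < inner ℝ e (w - m) :=
        (show Continuous fun w => inner ℝ e (w - m) by fun_prop).continuousAt.eventually
          (lt_mem_nhds s3)
      have o4 : ∀ᶠ w in 𝓝 z, ‖w - m‖ < r :=
        (show Continuous fun w => ‖w - m‖ by fun_prop).continuousAt.eventually (gt_mem_nhds s4)
      filter_upwards [o1, o2, o3, o4] with w w1 w2 w3 w4
      refine hzmax ⟨?_, w3.le, w1.le, w2.le⟩
      rw [mem_closedBall, dist_eq_norm]; exact w4.le
    have := hcdq z ⟨hz, hi, hz1, hz2⟩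
    have := lap_nonpos_of_isLocalMax this.1 hloc
    linarith
  have hfinal : v x - v y ≤ h x := by
    refine le_of_forall_pos_le_add fun ε hε => ?_
    have hp : 0 < fs x + fs y + 1 := by linarith [fs_nonneg x, fs_nonneg y]
    have := key (ε / (fs x + fs y + 1)) (by positivity)
    have h2 : ε / (fs x + fs y + 1) * (fs x + fs y) ≤ ε := by
      rw [div_mul_eq_mul_div, div_le_iff₀ hp]
      nlinarith
    linarith
  have hhx : h x = B * r * τ - B * τ ^ 2 + K * τ ^ 2 := by
    simp only [h, hx]
    simp [inner_smul_right, he, norm_smul]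
  rw [hhx] at hfinal
  have : K * τ ^ 2 ≤ K * r * τ := by
    have := mul_nonneg hK0 (mul_nonneg hτ0 (sub_nonneg.2 hτ)); nlinarith
  have h3 : 0 ≤ B * τ ^ 2 := by positivity
  have h4 : ((n + 1) * N / r + F * r) * τ = B * r * τ + K * r * τ := by
    rw [hB, hK]; field_simp; ring
  linarith

end Serrin

namespace Serrin

variable {n : ℕ}

lemma lip2 (hn : 5 ≤ n) {v : E n → ℝ} {x y : E n} {r N F : ℝ} (hr : 0 < r)
    (hxy : ‖x - y‖ ≤ 2 * r) (hN : 0 ≤ N) (hF : 0 ≤ F)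
    (hv : ∀ z ∈ closedBall ((2:ℝ)⁻¹ • (x + y)) r, z ≠ 0 → ContDiffAt ℝ 2 v z)
    (hb : ∀ z ∈ closedBall ((2:ℝ)⁻¹ • (x + y)) r, z ≠ 0 → 0 ≤ v z ∧ v z ≤ N)
    (hl : ∀ z ∈ closedBall ((2:ℝ)⁻¹ • (x + y)) r, z ≠ 0 → |lap v z| < F)
    (hx0 : x ≠ 0) (hy0 : y ≠ 0) :
    v x - v y ≤ ((n + 1) * N / r + F * r) * (‖x - y‖ / 2) := by
  by_cases h : x = y
  · subst h; simp
  have hpos : 0 < ‖x - y‖ := norm_pos_iff.2 (sub_ne_zero.2 h)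
  set e : E n := (‖x - y‖)⁻¹ • (x - y) with he
  have he1 : ‖e‖ = 1 := by
    rw [he, norm_smul, norm_inv, norm_norm, inv_mul_cancel₀ hpos.ne']
  have hte : (‖x - y‖ / 2) • e = (2:ℝ)⁻¹ • (x - y) := by
    rw [he, smul_smul]; congr 1; field_simp
  have e1 : (2:ℝ)⁻¹ • (x + y) + (‖x - y‖ / 2) • e = x := by rw [hte]; module
  have e2 : (2:ℝ)⁻¹ • (x + y) - (‖x - y‖ / 2) • e = y := by rw [hte]; module
  have := lip hn hr he1 (τ := ‖x - y‖ / 2) (by positivity) (by linarith) hN hF hv hb hl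
    (by rw [e1]; exact hx0) (by rw [e2]; exact hy0)
  rwa [e1, e2] at this

/-- Interior estimate for `w = -Δ u`. -/
lemma interior (hn : 5 ≤ n) {u w : E n → ℝ} {x₀ : E n} {R M F : ℝ} (hR : 0 < R)
    (hF : 0 < F)
    (h0 : ∀ z ∈ closedBall x₀ R, z ≠ 0)
    (hu : ∀ z ∈ closedBall x₀ R, ContDiffAt ℝ 2 u z)
    (hw : ∀ z ∈ closedBall x₀ R, ContDiffAt ℝ 2 w z)
    (hu0 : ∀ z ∈ closedBall x₀ R, 0 ≤ u z)
    (huM : ∀ z ∈ closedBall x₀ R, u z ≤ M)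
    (hw0 : ∀ z ∈ closedBall x₀ R, 0 ≤ w z)
    (hlu : ∀ z ∈ closedBall x₀ R, lap u z = - w z)
    (hlw : ∀ z ∈ closedBall x₀ R, |lap w z| < F) :
    w x₀ * R ^ 2 ≤ F * R ^ 4 + 8 * n * (64 * (n + 1)) ^ 2 * M := by
  have hx0 : x₀ ∈ closedBall x₀ R := mem_closedBall_self hR.le
  have hM : 0 ≤ M := (hu0 _ hx0).trans (huM _ hx0)
  have hnpos : (0:ℝ) < n := by exact_mod_cast (by omega : 0 < n)
  obtain ⟨x₁, hx1, hmax⟩ := (isCompact_closedBall x₀ R).exists_isMaxOn ⟨x₀, hx0⟩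
    (f := fun z => (R - ‖z - x₀‖) ^ 2 * w z)
    (fun z hz => ContinuousWithinAt.mul (by fun_prop)
      (hw z hz).continuousAt.continuousWithinAt)
  set d := R - ‖x₁ - x₀‖ with hd
  set K := d ^ 2 * w x₁ with hK
  have hmax' : ∀ z ∈ closedBall x₀ R, (R - ‖z - x₀‖) ^ 2 * w z ≤ K := fun z hz => hmax hz
  have hKw : w x₀ * R ^ 2 ≤ K := by
    have := hmax' x₀ hx0
    simp at this; linarith
  refine hKw.trans ?_
  have hd0 : 0 ≤ d := by
    have : ‖x₁ - x₀‖ ≤ R := by simpa [dist_eq_norm] using hx1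
    linarith
  have hdR : d ≤ R := by linarith [norm_nonneg (x₁ - x₀)]
  have hK0 : 0 ≤ K := mul_nonneg (by positivity) (hw0 _ hx1)
  rcases le_or_gt K (F * d ^ 4) with hcase | hcase
  · have : F * d ^ 4 ≤ F * R ^ 4 := by gcongr
    have : 0 ≤ 8 * n * (64 * (n + 1)) ^ 2 * M := by positivity
    linarith
  have hKpos : 0 < K := lt_of_le_of_lt (by positivity) hcase
  have hdpos : 0 < d := by
    rcases hd0.lt_or_eq with h | h
    · exact h
    · rw [hK, ← h] at hKpos; simp at hKpos
  set θ : ℝ := 1 / (64 * (n + 1)) with hθ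
  have hθ0 : 0 < θ := by positivity
  have hθ1 : θ ≤ 1 / 64 := by
    rw [hθ]; apply one_div_le_one_div_of_le (by norm_num); linarith
  have hball : ∀ z, ‖z - x₁‖ ≤ d / 2 → z ∈ closedBall x₀ R ∧ w z ≤ 4 * K / d ^ 2 := by
    intro z hz
    have h1 : ‖z - x₀‖ ≤ ‖z - x₁‖ + ‖x₁ - x₀‖ := norm_sub_le_norm_sub_add_norm_sub _ _ _
    have hzR : z ∈ closedBall x₀ R := by rw [mem_closedBall, dist_eq_norm]; linarith
    refine ⟨hzR, ?_⟩
    have h2 := hmax' z hzR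
    have h3 : d / 2 ≤ R - ‖z - x₀‖ := by linarith
    have h4 : (d / 2) ^ 2 * w z ≤ (R - ‖z - x₀‖) ^ 2 * w z := by
      have := hw0 z hzR
      gcongr
    rw [le_div_iff₀ (by positivity)]
    linarith
  set a := K / (2 * d ^ 2) with ha
  have hapos : 0 < a := by positivity
  have hwx1 : w x₁ = 2 * a := by rw [ha, hK]; field_simp
  have hlow : ∀ y, ‖y - x₁‖ ≤ θ * d → y ∈ closedBall x₀ R ∧ a ≤ w y := by
    intro y hy
    have hθd : θ * d ≤ d / 64 := by nlinarith
    have hyb := (hball y (by linarith)).1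
    refine ⟨hyb, ?_⟩
    have hmid : ∀ z ∈ closedBall ((2:ℝ)⁻¹ • (x₁ + y)) (d / 4), ‖z - x₁‖ ≤ d / 2 := by
      intro z hz
      rw [mem_closedBall, dist_eq_norm] at hz
      have e1 : z - x₁ = (z - (2:ℝ)⁻¹ • (x₁ + y)) + (2:ℝ)⁻¹ • (y - x₁) := by module
      have e2 : ‖(2:ℝ)⁻¹ • (y - x₁)‖ = ‖y - x₁‖ / 2 := by
        rw [norm_smul]; norm_num; ring
      calc ‖z - x₁‖ ≤ ‖z - (2:ℝ)⁻¹ • (x₁ + y)‖ + ‖(2:ℝ)⁻¹ • (y - x₁)‖ := by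
            rw [e1]; exact norm_add_le _ _
        _ ≤ d / 2 := by rw [e2]; linarith [norm_nonneg (y - x₁)]
    have hyn : ‖x₁ - y‖ ≤ θ * d := by rw [norm_sub_rev]; exact hy
    have := lip2 hn (v := w) (x := x₁) (y := y) (r := d / 4) (N := 4 * K / d ^ 2) (F := F)
      (by positivity) (by linarith) (by positivity) hF.le
      (fun z hz _ => hw z (hball z (hmid z hz)).1)
      (fun z hz _ => ⟨hw0 z (hball z (hmid z hz)).1, (hball z (hmid z hz)).2⟩)
      (fun z hz _ => hlw z (hball z (hmid z hz)).1)
      (h0 _ hx1) (h0 _ hyb)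
    have h5 : ((n + 1) * (4 * K / d ^ 2) / (d / 4) + F * (d / 4)) * (‖x₁ - y‖ / 2)
        ≤ ((n + 1) * (4 * K / d ^ 2) / (d / 4) + F * (d / 4)) * (θ * d / 2) := by
      gcongr
    have h6 : ((n + 1) * (4 * K / d ^ 2) / (d / 4) + F * (d / 4)) * (θ * d / 2)
        = a / 4 + F * d ^ 2 * θ / 8 := by
      rw [ha, hθ]; field_simp; ring
    have h7 : F * d ^ 2 ≤ 2 * a := by
      rw [ha, ← mul_div_assoc, le_div_iff₀ (by positivity)]
      nlinarith
    have h8 : F * d ^ 2 * θ ≤ 2 * a := by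
      have : 0 ≤ F * d ^ 2 := by positivity
      nlinarith
    linarith
  have hstep : a / (4 * n) * (θ * d) ^ 2 ≤ u x₁ := by
    by_contra! hcon
    set s := θ * d with hs
    have hs0 : 0 < s := by positivity
    let q : E n → ℝ := fun z => (a / (4 * n) * s ^ 2 - a / (4 * n) * ‖z - x₁‖ ^ 2) - u z
    have hq1 : 0 < q x₁ := by simp only [q]; simp; linarith
    have hsub : ∀ z ∈ closedBall x₁ s, z ∈ closedBall x₀ R ∧ a ≤ w z := by
      intro z hz
      exact hlow z (by simpa [dist_eq_norm] using hz)
    have hcd1 : ∀ z, ContDiffAt ℝ 2 (fun z : E n => a / (4 * n) * s ^ 2 -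
        a / (4 * n) * ‖z - x₁‖ ^ 2) z := fun z =>
      contDiffAt_const.sub (contDiffAt_const.mul (lap_normsq_sub x₁ z).1)
    have hcdq : ∀ z ∈ closedBall x₁ s, ContDiffAt ℝ 2 q z ∧ 0 < lap q z := by
      intro z hz
      have hz' := hsub z hz
      refine ⟨(hcd1 z).sub (hu z hz'.1), ?_⟩
      simp only [q]
      rw [lap_sub (hcd1 z) (hu z hz'.1), lap_sub contDiffAt_const
        (contDiffAt_const.mul (lap_normsq_sub x₁ z).1), lap_const,
        lap_const_mul (lap_normsq_sub x₁ z).1, (lap_normsq_sub x₁ z).2, hlu z hz'.1]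
      have : a / (4 * n) * (2 * n) = a / 2 := by field_simp; ring
      rw [this]
      linarith [hz'.2]
    obtain ⟨z, hz, hzmax⟩ := (isCompact_closedBall x₁ s).exists_isMaxOn
      ⟨x₁, mem_closedBall_self hs0.le⟩
      (fun z hz => (hcdq z hz).1.continuousAt.continuousWithinAt)
    have hqz : 0 < q z := lt_of_lt_of_le hq1 (hzmax (mem_closedBall_self hs0.le))
    have hzs : ‖z - x₁‖ < s := by
      have h1 : ‖z - x₁‖ ≤ s := by simpa [dist_eq_norm] using hz
      rcases h1.lt_or_eq with h | h
      · exact h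
      · have := hu0 z (hsub z hz).1
        simp only [q, h] at hqz
        linarith
    have hloc : IsLocalMax q z := by
      refine hzmax.isLocalMax ?_
      refine mem_of_superset (isOpen_ball.mem_nhds ?_) ball_subset_closedBall
      rwa [mem_ball, dist_eq_norm]
    have := lap_nonpos_of_isLocalMax (hcdq z hz).1 hloc
    linarith [(hcdq z hz).2]
  have hfin := hstep.trans (huM _ hx1)
  have : a / (4 * n) * (θ * d) ^ 2 = K / (8 * n * (64 * (n + 1)) ^ 2) := by
    rw [ha, hθ]; field_simp; ring
  rw [this, div_le_iff₀ (by positivity)] at hfin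
  have : 0 ≤ F * R ^ 4 := by positivity
  linarith

end Serrin

namespace Serrin

variable {n : ℕ}

lemma isCompact_annulus (ρ r : ℝ) : IsCompact {x : E n | ρ ≤ ‖x‖ ∧ ‖x‖ ≤ r} := by
  have : {x : E n | ρ ≤ ‖x‖ ∧ ‖x‖ ≤ r} = closedBall 0 r ∩ {x | ρ ≤ ‖x‖} := by
    ext x; simp [and_comm]
  rw [this]
  exact (isCompact_closedBall _ _).inter_right (isClosed_le continuous_const continuous_norm)

lemma annulus_nhds {ρ r : ℝ} {x : E n} (h1 : ρ < ‖x‖) (h2 : ‖x‖ < r) :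
    {x : E n | ρ ≤ ‖x‖ ∧ ‖x‖ ≤ r} ∈ 𝓝 x := by
  filter_upwards [continuous_norm.continuousAt.eventually (lt_mem_nhds h1),
    continuous_norm.continuousAt.eventually (gt_mem_nhds h2)] with y a b
  exact ⟨a.le, b.le⟩

/-- Comparison principle for the cooperative system on an annulus. -/
lemma compare_sys {ρ r : ℝ} {u w φ ψ V : E n → ℝ}
    (hu : ∀ x, ρ ≤ ‖x‖ → ‖x‖ ≤ r → ContDiffAt ℝ 2 u x)
    (hw : ∀ x, ρ ≤ ‖x‖ → ‖x‖ ≤ r → ContDiffAt ℝ 2 w x)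
    (hφ : ∀ x, ρ ≤ ‖x‖ → ‖x‖ ≤ r → ContDiffAt ℝ 2 φ x)
    (hψ : ∀ x, ρ ≤ ‖x‖ → ‖x‖ ≤ r → ContDiffAt ℝ 2 ψ x)
    (hφ0 : ∀ x, ρ ≤ ‖x‖ → ‖x‖ ≤ r → 0 < φ x)
    (hψ0 : ∀ x, ρ ≤ ‖x‖ → ‖x‖ ≤ r → 0 < ψ x)
    (hV : ∀ x, ρ ≤ ‖x‖ → ‖x‖ ≤ r → 0 ≤ V x)
    (hlu : ∀ x, ρ ≤ ‖x‖ → ‖x‖ ≤ r → lap u x = - w x)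
    (hlw : ∀ x, ρ ≤ ‖x‖ → ‖x‖ ≤ r → lap w x = - (V x * u x))
    (hlφ : ∀ x, ρ ≤ ‖x‖ → ‖x‖ ≤ r → lap φ x < - ψ x)
    (hlψ : ∀ x, ρ ≤ ‖x‖ → ‖x‖ ≤ r → lap ψ x < - (V x * φ x))
    (hb1 : ∀ x, ‖x‖ = ρ → u x ≤ φ x ∧ w x ≤ ψ x)
    (hb2 : ∀ x, ‖x‖ = r → u x ≤ φ x ∧ w x ≤ ψ x) :
    ∀ x, ρ ≤ ‖x‖ → ‖x‖ ≤ r → u x ≤ φ x ∧ w x ≤ ψ x := by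
  intro x hx1 hx2
  set D := {x : E n | ρ ≤ ‖x‖ ∧ ‖x‖ ≤ r} with hD
  obtain ⟨z, hz, hzmax⟩ := (isCompact_annulus (n := n) ρ r).exists_isMaxOn ⟨x, hx1, hx2⟩
    (f := fun y => max (u y / φ y) (w y / ψ y)) (fun y hy =>
      ContinuousAt.continuousWithinAt (((hu y hy.1 hy.2).continuousAt.div (hφ y hy.1 hy.2).continuousAt
        (hφ0 y hy.1 hy.2).ne').max ((hw y hy.1 hy.2).continuousAt.div
          (hψ y hy.1 hy.2).continuousAt (hψ0 y hy.1 hy.2).ne')))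
  set κ := max (u z / φ z) (w z / ψ z) with hκ
  have hall : ∀ y, ρ ≤ ‖y‖ → ‖y‖ ≤ r → u y ≤ κ * φ y ∧ w y ≤ κ * ψ y := by
    intro y h1 h2
    have h := hzmax (show y ∈ D from ⟨h1, h2⟩)
    have h3 : max (u y / φ y) (w y / ψ y) ≤ κ := h
    rw [max_le_iff, div_le_iff₀ (hφ0 y h1 h2), div_le_iff₀ (hψ0 y h1 h2)] at h3
    exact h3
  suffices hκ1 : κ ≤ 1 by
    have h := hall x hx1 hx2
    have := hφ0 x hx1 hx2
    have := hψ0 x hx1 hx2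
    constructor
    · nlinarith [h.1]
    · nlinarith [h.2]
  by_contra! hκ1
  have hz1 := hz.1
  have hz2 := hz.2
  have hp1 := hφ0 z hz1 hz2
  have hp2 := hψ0 z hz1 hz2
  rcases max_choice (u z / φ z) (w z / ψ z) with hc | hc
  · rw [← hκ] at hc
    have heq : u z = κ * φ z := by rw [hc]; field_simp
    have hntl : ∀ c, ‖z‖ = c → ¬ (u z ≤ φ z) := by
      intro c _ h; nlinarith
    have s1 : ρ < ‖z‖ := lt_of_le_of_ne hz1 fun h => hntl _ h.symm (hb1 z h.symm).1
    have s2 : ‖z‖ < r := lt_of_le_of_ne hz2 fun h => hntl _ h (hb2 z h).1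
    have hcd : ContDiffAt ℝ 2 (fun y => u y - κ * φ y) z :=
      (hu z hz1 hz2).sub (contDiffAt_const.mul (hφ z hz1 hz2))
    have hloc : IsLocalMax (fun y => u y - κ * φ y) z := by
      filter_upwards [annulus_nhds s1 s2] with y hy
      have := (hall y hy.1 hy.2).1
      linarith
    have := lap_nonpos_of_isLocalMax hcd hloc
    rw [lap_sub (hu z hz1 hz2) (contDiffAt_const.mul (hφ z hz1 hz2)),
      lap_const_mul (hφ z hz1 hz2), hlu z hz1 hz2] at this
    have h1 := hlφ z hz1 hz2
    have h2 := (hall z hz1 hz2).2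
    nlinarith
  · rw [← hκ] at hc
    have heq : w z = κ * ψ z := by rw [hc]; field_simp
    have hntl : ∀ c, ‖z‖ = c → ¬ (w z ≤ ψ z) := by
      intro c _ h; nlinarith
    have s1 : ρ < ‖z‖ := lt_of_le_of_ne hz1 fun h => hntl _ h.symm (hb1 z h.symm).2
    have s2 : ‖z‖ < r := lt_of_le_of_ne hz2 fun h => hntl _ h (hb2 z h).2
    have hcd : ContDiffAt ℝ 2 (fun y => w y - κ * ψ y) z :=
      (hw z hz1 hz2).sub (contDiffAt_const.mul (hψ z hz1 hz2))
    have hloc : IsLocalMax (fun y => w y - κ * ψ y) z := by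
      filter_upwards [annulus_nhds s1 s2] with y hy
      have := (hall y hy.1 hy.2).2
      linarith
    have := lap_nonpos_of_isLocalMax hcd hloc
    rw [lap_sub (hw z hz1 hz2) (contDiffAt_const.mul (hψ z hz1 hz2)),
      lap_const_mul (hψ z hz1 hz2), hlw z hz1 hz2] at this
    have h1 := hlψ z hz1 hz2
    have h2 := mul_le_mul_of_nonneg_left (hall z hz1 hz2).1 (hV z hz1 hz2)
    nlinarith

/-- Scalar removability. -/
lemma scalar_bound (hn : 5 ≤ n) {r K C : ℝ} {v : E n → ℝ} (hr : 0 < r) (hr1 : r ≤ 1)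
    (hK : 0 ≤ K) (hC : 0 ≤ C)
    (hv : ∀ x, x ≠ 0 → ‖x‖ ≤ r → ContDiffAt ℝ 2 v x)
    (hl : ∀ x, x ≠ 0 → ‖x‖ ≤ r → -(C / ‖x‖) ≤ lap v x)
    (hb : ∀ x, x ≠ 0 → ‖x‖ ≤ r → v x ≤ K * ‖x‖ ^ (-(5/2) : ℝ)) :
    ∃ M : ℝ, 0 ≤ M ∧ ∀ x, x ≠ 0 → ‖x‖ ≤ r → v x ≤ M := by
  have hn' : (5:ℝ) ≤ n := by exact_mod_cast hn
  set A := K * r ^ (-(5/2) : ℝ) with hA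
  have hA0 : 0 ≤ A := by positivity
  refine ⟨A + (C + 1), by positivity, ?_⟩
  intro x hx hxr
  refine le_of_forall_pos_le_add fun ε hε => ?_
  set δ := ε / (fs x + 1) with hδ
  have hf1 : 0 < fs x + 1 := by linarith [fs_nonneg x]
  have hδ0 : 0 < δ := by positivity
  have hδε : δ * fs x ≤ ε := by
    rw [hδ, div_mul_eq_mul_div, div_le_iff₀ hf1]; nlinarith
  let q : E n → ℝ := fun y => v y + (C + 1) * (‖y‖ ^ 2) ^ (1/2 : ℝ) - δ * fs y
  have hsq : ∀ y : E n, (‖y‖ ^ 2) ^ (1/2 : ℝ) = ‖y‖ := by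
    intro y; rw [normsq_rpow]; norm_num
  suffices hq : q x ≤ A + (C + 1) by
    simp only [q, hsq] at hq
    have : 0 ≤ (C + 1) * ‖x‖ := by positivity
    linarith
  by_contra! hqx
  -- choose inner radius
  set ρ := min ‖x‖ ((δ / (K + 1)) ^ 2) with hρ
  have hρ0 : 0 < ρ := lt_min (norm_pos_iff.2 hx) (by positivity)
  have hne : ∀ y : E n, ρ ≤ ‖y‖ → y ≠ 0 := by
    intro z hz h0; rw [h0, norm_zero] at hz; linarith
  have hcdq : ∀ y, ρ ≤ ‖y‖ → ‖y‖ ≤ r → ContDiffAt ℝ 2 q y ∧ 0 < lap q y := by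
    intro y h1 h2
    have y0 := hne y h1
    have c1 := hv y y0 h2
    have c2 := contDiffAt_normsq_rpow (1/2) y0
    have c3 := fs_cd y0
    have yp := norm_pos_iff.2 y0
    refine ⟨(c1.add (contDiffAt_const.mul c2)).sub (contDiffAt_const.mul c3), ?_⟩
    simp only [q]
    rw [lap_sub (c1.add (contDiffAt_const.mul c2)) (contDiffAt_const.mul c3),
      lap_add c1 (contDiffAt_const.mul c2), lap_const_mul c2, lap_const_mul c3, fs_lap y0,
      lap_pow _ y0, normsq_rpow]
    have e1 : ‖y‖ ^ (2 * ((1:ℝ)/2 - 1)) = 1 / ‖y‖ := by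
      rw [show (2 * ((1:ℝ)/2 - 1)) = -1 by norm_num, Real.rpow_neg_one]; simp
    rw [e1]
    have e2 := hl y y0 h2
    have e3 : C / ‖y‖ = C * (1 / ‖y‖) := by ring
    have e4 : 0 < 1 / ‖y‖ := by positivity
    rw [e3] at e2
    have e5 : 0 < ((C + 1) * (n - 1) - C) * (1 / ‖y‖) := by
      apply mul_pos _ e4; nlinarith
    nlinarith
  have hxD : x ∈ {x : E n | ρ ≤ ‖x‖ ∧ ‖x‖ ≤ r} := ⟨min_le_left _ _, hxr⟩
  obtain ⟨z, hz, hzmax⟩ := (isCompact_annulus (n := n) ρ r).exists_isMaxOn ⟨x, hxD⟩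
    (fun y hy => (hcdq y hy.1 hy.2).1.continuousAt.continuousWithinAt)
  have hqz : A + (C + 1) < q z := lt_of_lt_of_le hqx (hzmax hxD)
  have z0 := hne z hz.1
  have zp := norm_pos_iff.2 z0
  have hbz := hb z z0 hz.2
  have hfz := mul_nonneg hδ0.le (fs_nonneg z)
  have hCz : (C + 1) * ‖z‖ ≤ C + 1 := by
    have := hz.2; nlinarith
  simp only [q, hsq] at hqz
  have s2 : ‖z‖ < r := by
    refine lt_of_le_of_ne hz.2 fun h => ?_
    rw [h, ← hA] at hbz
    rw [h] at hCz
    rw [h] at hqz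
    linarith
  have s1 : ρ < ‖z‖ := by
    refine lt_of_le_of_ne hz.1 fun h => ?_
    have g1 : ‖z‖ ≤ (δ / (K + 1)) ^ 2 := by rw [← h]; exact min_le_right _ _
    have g2 : ‖z‖ ^ (1/2 : ℝ) ≤ δ / (K + 1) := by
      rw [← Real.sqrt_eq_rpow]
      exact Real.sqrt_le_iff.2 ⟨by positivity, g1⟩
    have g3 : K * ‖z‖ ^ (1/2 : ℝ) ≤ δ := by
      rw [le_div_iff₀ (by positivity)] at g2
      have : 0 ≤ ‖z‖ ^ (1/2 : ℝ) := by positivity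
      nlinarith
    have g4 : ‖z‖ ^ (-(5/2) : ℝ) = ‖z‖ ^ (1/2 : ℝ) * ‖z‖ ^ (-3 : ℝ) := by
      rw [← Real.rpow_add zp]; norm_num
    have g5 : ‖z‖ ^ (-3 : ℝ) ≤ fs z := by
      rw [fs_eq]
      exact Real.rpow_le_rpow_of_exponent_ge zp (hz.2.trans hr1) (by linarith)
    have g6 : K * ‖z‖ ^ (-(5/2) : ℝ) ≤ δ * fs z := by
      rw [g4, ← mul_assoc]
      exact mul_le_mul g3 g5 (by positivity) hδ0.le
    linarith
  have hloc : IsLocalMax q z := hzmax.isLocalMax (annulus_nhds s1 s2)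
  have := lap_nonpos_of_isLocalMax (hcdq z hz.1 hz.2).1 hloc
  linarith [(hcdq z hz.1 hz.2).2]

/-- log barriers -/
noncomputable def phi (y : E n) : ℝ := G ((4 - (n:ℝ)) / 2) (-(1/4)) (‖y‖ ^ 2)

/-- log barriers -/
noncomputable def psi (y : E n) : ℝ := G ((2 - (n:ℝ)) / 2) (-(1/4)) (‖y‖ ^ 2)

/-- power barriers -/
noncomputable def Phi (y : E n) : ℝ := (‖y‖ ^ 2) ^ (-(1 / (2 * (n:ℝ))))

/-- power barriers -/
noncomputable def Psi (y : E n) : ℝ := 1 / (n:ℝ) * (‖y‖ ^ 2) ^ (-(1 / (2 * (n:ℝ))) - 1)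

lemma tau_ge {x : E n} (hx : x ≠ 0) (h : ‖x‖ ≤ Real.exp (-1)) : 2 ≤ -Real.log (‖x‖ ^ 2) := by
  have hp := norm_pos_iff.2 hx
  have := Real.log_le_log hp h
  rw [Real.log_exp] at this
  rw [Real.log_pow]; push_cast; linarith

lemma lt_one_of_le_exp {x : E n} (h : ‖x‖ ≤ Real.exp (-1)) : ‖x‖ < 1 :=
  lt_of_le_of_lt h (by rw [Real.exp_lt_one_iff]; norm_num)

lemma phi_lap (hn : 5 ≤ n) {x : E n} (hx : x ≠ 0) (h : ‖x‖ ≤ Real.exp (-1)) :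
    lap (phi : E n → ℝ) x < - psi x := by
  have hn' : (5:ℝ) ≤ n := by exact_mod_cast hn
  have h1 := lt_one_of_le_exp h
  have hτ := tau_ge hx h
  have hp : 0 < psi x := G_pos _ _ (by positivity) (by nlinarith [norm_nonneg x])
  have hl := lap_G ((4 - (n:ℝ)) / 2) (-(1/4)) hx h1
  have e : G ((4 - (n:ℝ)) / 2 - 1) (-(1/4)) (‖x‖ ^ 2) = psi x := by
    unfold psi; congr 1; ring
  rw [e] at hl
  unfold phi
  rw [hl]
  generalize -Real.log (‖x‖ ^ 2) = τ at *
  have hs : 0 < 1 / τ := by positivity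
  have hs2 : 1 / τ ≤ 1 / 2 := one_div_le_one_div_of_le (by norm_num) hτ
  set s := 1 / τ with hs'
  have e2 : 2 * ((4 - (n:ℝ)) / 2) * (2 * ((4 - (n:ℝ)) / 2) - 2 + n)
        - 2 * (-(1/4)) * (4 * ((4 - (n:ℝ)) / 2) - 2 + n) / τ
        + 4 * (-(1/4)) * ((-(1/4)) - 1) / τ ^ 2
      = -2 * (n - 4) + 1 / 2 * (6 - n) * s + 5 / 4 * s ^ 2 := by
    rw [hs']; field_simp; ring
  rw [e2]
  have : -2 * ((n:ℝ) - 4) + 1 / 2 * (6 - n) * s + 5 / 4 * s ^ 2 < -1 := by nlinarith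
  nlinarith

lemma psi_lap (hn : 5 ≤ n) {x : E n} {V : ℝ} (hx : x ≠ 0) (h : ‖x‖ ≤ Real.exp (-1))
    (hV : V * (‖x‖ ^ 2) ^ 2 * (-Real.log (‖x‖ ^ 2)) ≤ 1 / n) :
    lap (psi : E n → ℝ) x < - (V * phi x) := by
  have hn' : (5:ℝ) ≤ n := by exact_mod_cast hn
  have h1 := lt_one_of_le_exp h
  have hτ := tau_ge hx h
  have hr : 0 < ‖x‖ ^ 2 := by positivity
  have hp : 0 < G (-(n:ℝ) / 2) (-(1/4)) (‖x‖ ^ 2) :=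
    G_pos _ _ hr (by nlinarith [norm_nonneg x])
  have hl := lap_G ((2 - (n:ℝ)) / 2) (-(1/4)) hx h1
  have e : (2 - (n:ℝ)) / 2 - 1 = -n / 2 := by ring
  rw [e] at hl
  have e3 : phi x = (‖x‖ ^ 2) ^ 2 * G (-(n:ℝ) / 2) (-(1/4)) (‖x‖ ^ 2) := by
    unfold phi G
    rw [show (4 - (n:ℝ)) / 2 = 2 + -n / 2 by ring, Real.rpow_add hr]
    norm_num
    ring
  rw [e3]
  unfold psi
  rw [hl]
  generalize G (-(n:ℝ) / 2) (-(1/4)) (‖x‖ ^ 2) = g at *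
  generalize -Real.log (‖x‖ ^ 2) = τ at *
  have hτ0 : 0 < τ := by linarith
  have hs : 0 < 1 / τ := by positivity
  have hs2 : 1 / τ ≤ 1 / 2 := one_div_le_one_div_of_le (by norm_num) hτ
  have hn5 : 1 / (n:ℝ) ≤ 1 / 5 := one_div_le_one_div_of_le (by norm_num) hn'
  have hVs : V * (‖x‖ ^ 2) ^ 2 ≤ 1 / 5 * (1 / τ) := by
    rw [mul_one_div, le_div_iff₀ hτ0]; linarith
  set s := 1 / τ with hs'
  have e2 : 2 * ((2 - (n:ℝ)) / 2) * (2 * ((2 - (n:ℝ)) / 2) - 2 + n)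
        - 2 * (-(1/4)) * (4 * ((2 - (n:ℝ)) / 2) - 2 + n) / τ
        + 4 * (-(1/4)) * ((-(1/4)) - 1) / τ ^ 2
      = 1 / 2 * (2 - n) * s + 5 / 4 * s ^ 2 := by
    rw [hs']; field_simp; ring
  rw [e2]
  have : 1 / 2 * (2 - n) * s + 5 / 4 * s ^ 2 < - (V * (‖x‖ ^ 2) ^ 2) := by nlinarith
  nlinarith

lemma Phi_lap (hn : 5 ≤ n) {x : E n} (hx : x ≠ 0) :
    lap (Phi : E n → ℝ) x ≤ - Psi x := by
  have hn' : (5:ℝ) ≤ n := by exact_mod_cast hn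
  have hn5 : 1 / (n:ℝ) ≤ 1 / 5 := one_div_le_one_div_of_le (by norm_num) hn'
  have hn0 : 0 < 1 / (n:ℝ) := by positivity
  unfold Phi Psi
  rw [lap_pow _ hx]
  have hp : 0 < (‖x‖ ^ 2) ^ (-(1 / (2 * (n:ℝ))) - 1) := by positivity
  have e : 2 * (-(1 / (2 * (n:ℝ)))) = - (1 / n) := by field_simp
  rw [e]
  have : 0 ≤ (1 / (n:ℝ)) * (- (1/n) - 2 + n - 1) * (‖x‖ ^ 2) ^ (-(1 / (2 * (n:ℝ))) - 1) := by
    apply mul_nonneg _ hp.le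
    apply mul_nonneg hn0.le
    linarith
  nlinarith

lemma Psi_lap (hn : 5 ≤ n) {x : E n} {V : ℝ} (hx : x ≠ 0) (h : ‖x‖ ≤ Real.exp (-1))
    (hV : V * (‖x‖ ^ 2) ^ 2 * (-Real.log (‖x‖ ^ 2)) ≤ 1 / n) :
    lap (Psi : E n → ℝ) x ≤ - (V * Phi x) := by
  have hn' : (5:ℝ) ≤ n := by exact_mod_cast hn
  have hn5 : 1 / (n:ℝ) ≤ 1 / 5 := one_div_le_one_div_of_le (by norm_num) hn'
  have hn0 : 0 < 1 / (n:ℝ) := by positivity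
  have hτ := tau_ge hx h
  have hr : 0 < ‖x‖ ^ 2 := by positivity
  unfold Psi
  rw [lap_const_mul (contDiffAt_normsq_rpow _ hx), lap_pow _ hx]
  have e3 : Phi x = (‖x‖ ^ 2) ^ 2 * (‖x‖ ^ 2) ^ (-(1 / (2 * (n:ℝ))) - 1 - 1) := by
    unfold Phi
    rw [← Real.rpow_two (‖x‖ ^ 2), ← Real.rpow_add hr]
    congr 1; ring
  rw [e3]
  have hp : 0 < (‖x‖ ^ 2) ^ (-(1 / (2 * (n:ℝ))) - 1 - 1) := by positivity
  generalize (‖x‖ ^ 2) ^ (-(1 / (2 * (n:ℝ))) - 1 - 1) = g at *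
  have e : 2 * (-(1 / (2 * (n:ℝ))) - 1) = - (1 / n) - 2 := by field_simp
  rw [e]
  generalize -Real.log (‖x‖ ^ 2) = τ at *
  have hVs : V * (‖x‖ ^ 2) ^ 2 ≤ 1 / n := by
    by_cases hv : 0 ≤ V * (‖x‖ ^ 2) ^ 2
    · nlinarith
    · linarith
  set t := 1 / (n:ℝ)
  have h2 : 1 ≤ (t + 2) * (n - 4 - t) := by nlinarith
  have h3 : V * (‖x‖ ^ 2) ^ 2 * g ≤ t * g := by gcongr
  have h4 : t * g ≤ t * g * ((t + 2) * (n - 4 - t)) := by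
    have : 0 ≤ t * g := by positivity
    nlinarith
  nlinarith

end Serrin

namespace Serrin

variable {n : ℕ}

lemma phi_pos {x : E n} (hx : x ≠ 0) (h : ‖x‖ ≤ Real.exp (-1)) : 0 < phi x := by
  have h1 := lt_one_of_le_exp h
  exact G_pos _ _ (by positivity) (by nlinarith [norm_nonneg x])

lemma psi_pos {x : E n} (hx : x ≠ 0) (h : ‖x‖ ≤ Real.exp (-1)) : 0 < psi x := by
  have h1 := lt_one_of_le_exp h
  exact G_pos _ _ (by positivity) (by nlinarith [norm_nonneg x])

lemma psi_eq {x : E n} (hx : x ≠ 0) : phi x = psi x * ‖x‖ ^ 2 := by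
  have hr : 0 < ‖x‖ ^ 2 := by positivity
  unfold phi psi G
  have : (‖x‖ ^ 2) ^ ((4 - (n:ℝ)) / 2) = (‖x‖ ^ 2) ^ ((2 - (n:ℝ)) / 2) * ‖x‖ ^ 2 := by
    nth_rw 3 [← Real.rpow_one (‖x‖ ^ 2)]
    rw [← Real.rpow_add hr]; congr 1; ring
  rw [this]; ring

lemma Phi_pos {x : E n} (hx : x ≠ 0) : 0 < Phi x := by
  unfold Phi; positivity

lemma Psi_pos (hn : 5 ≤ n) {x : E n} (hx : x ≠ 0) : 0 < Psi x := by
  have : 0 < n := by omega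
  unfold Psi; positivity

/-- Power bound via comparison. -/
lemma power_bound (hn : 5 ≤ n) {r : ℝ} (hr : 0 < r) (hr1 : r ≤ Real.exp (-1)) {u w V : E n → ℝ}
    (hu : ∀ x, x ≠ 0 → ‖x‖ ≤ r → ContDiffAt ℝ 2 u x)
    (hw : ∀ x, x ≠ 0 → ‖x‖ ≤ r → ContDiffAt ℝ 2 w x)
    (hV : ∀ x, x ≠ 0 → ‖x‖ ≤ r → 0 ≤ V x)
    (hV' : ∀ x, x ≠ 0 → ‖x‖ ≤ r → V x * (‖x‖ ^ 2) ^ 2 * (-Real.log (‖x‖ ^ 2)) ≤ 1 / n)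
    (hlu : ∀ x, x ≠ 0 → ‖x‖ ≤ r → lap u x = - w x)
    (hlw : ∀ x, x ≠ 0 → ‖x‖ ≤ r → lap w x = - (V x * u x))
    (h2 : ∀ η > 0, ∃ ρ > 0, ∀ x : E n, x ≠ 0 → ‖x‖ ≤ ρ → u x ≤ η * phi x)
    (h3 : ∀ η > 0, ∃ ρ > 0, ∀ x : E n, x ≠ 0 → ‖x‖ ≤ ρ → w x ≤ η * psi x) :
    ∃ K, 0 ≤ K ∧ ∀ x, x ≠ 0 → ‖x‖ ≤ r → u x ≤ K * Phi x ∧ w x ≤ K * Psi x := by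
  have hne : ∀ {x : E n} {ρ : ℝ}, 0 < ρ → ρ ≤ ‖x‖ → x ≠ 0 := by
    intro x ρ h h' h0
    rw [h0, norm_zero] at h'; linarith
  have hcpt : IsCompact {x : E n | r ≤ ‖x‖ ∧ ‖x‖ ≤ r} := isCompact_annulus r r
  have hcu : ContinuousOn u {x : E n | r ≤ ‖x‖ ∧ ‖x‖ ≤ r} := fun x hx =>
    (hu x (hne hr hx.1) hx.2).continuousAt.continuousWithinAt
  have hcw : ContinuousOn w {x : E n | r ≤ ‖x‖ ∧ ‖x‖ ≤ r} := fun x hx =>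
    (hw x (hne hr hx.1) hx.2).continuousAt.continuousWithinAt
  obtain ⟨B1, hB1⟩ := hcpt.exists_bound_of_continuousOn hcu
  obtain ⟨B2, hB2⟩ := hcpt.exists_bound_of_continuousOn hcw
  set c1 : ℝ := (r ^ 2) ^ (-(1 / (2 * (n:ℝ)))) with hc1
  set c2 : ℝ := 1 / n * (r ^ 2) ^ (-(1 / (2 * (n:ℝ))) - 1) with hc2
  have hn0 : 0 < n := by omega
  have c1p : 0 < c1 := by positivity
  have c2p : 0 < c2 := by positivity
  set K := |B1| / c1 + |B2| / c2 + 1 with hK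
  have hK0 : 0 < K := by positivity
  have hKc1 : B1 ≤ K * c1 := by
    have : |B1| / c1 ≤ K := by
      have : 0 ≤ |B2| / c2 := by positivity
      linarith
    rw [div_le_iff₀ c1p] at this
    linarith [le_abs_self B1]
  have hKc2 : B2 ≤ K * c2 := by
    have : |B2| / c2 ≤ K := by
      have : 0 ≤ |B1| / c1 := by positivity
      linarith
    rw [div_le_iff₀ c2p] at this
    linarith [le_abs_self B2]
  refine ⟨K, hK0.le, ?_⟩
  intro x hx hxr
  have hxe := hxr.trans hr1
  have key : ∀ δ > 0, u x ≤ δ * phi x + K * Phi x ∧ w x ≤ δ * psi x + K * Psi x := by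
    intro δ hδ
    obtain ⟨ρ2, hρ2, h2⟩ := h2 δ hδ
    obtain ⟨ρ3, hρ3, h3⟩ := h3 δ hδ
    have hxp : 0 < ‖x‖ := norm_pos_iff.mpr hx
    set ρ := min (min ρ2 ρ3) ‖x‖ with hρ
    have hρ0 : 0 < ρ := lt_min (lt_min hρ2 hρ3) hxp
    have hρa : ρ ≤ ρ2 := (min_le_left _ _).trans (min_le_left _ _)
    have hρb : ρ ≤ ρ3 := (min_le_left _ _).trans (min_le_right _ _)
    have hcd : ∀ y : E n, ρ ≤ ‖y‖ → ‖y‖ ≤ r → ContDiffAt ℝ 2 (phi : E n → ℝ) y ∧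
        ContDiffAt ℝ 2 (psi : E n → ℝ) y ∧ ContDiffAt ℝ 2 (Phi : E n → ℝ) y ∧
        ContDiffAt ℝ 2 (Psi : E n → ℝ) y := by
      intro y h h'
      have h0 := hne hρ0 h
      have h1 := lt_one_of_le_exp (h'.trans hr1)
      refine ⟨contDiffAt_G _ _ h0 h1, contDiffAt_G _ _ h0 h1, contDiffAt_normsq_rpow _ h0, ?_⟩
      exact contDiffAt_const.mul (contDiffAt_normsq_rpow _ h0)
    have hsc : ∀ (c : ℝ) {f : E n → ℝ} {y : E n}, ContDiffAt ℝ 2 f y →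
        ContDiffAt ℝ 2 (fun z => c * f z) y := fun c f y h => contDiffAt_const.mul h
    refine compare_sys (ρ := ρ) (r := r) (u := u) (w := w)
      (φ := fun y => δ * phi y + K * Phi y) (ψ := fun y => δ * psi y + K * Psi y) (V := V)
      (fun y h h' => hu y (hne hρ0 h) h') (fun y h h' => hw y (hne hρ0 h) h')
      (fun y h h' => (hsc δ (hcd y h h').1).add (hsc K (hcd y h h').2.2.1))
      (fun y h h' => (hsc δ (hcd y h h').2.1).add (hsc K (hcd y h h').2.2.2))
      ?_ ?_ (fun y h h' => hV y (hne hρ0 h) h')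
      (fun y h h' => hlu y (hne hρ0 h) h') (fun y h h' => hlw y (hne hρ0 h) h')
      ?_ ?_ ?_ ?_ x (min_le_right _ _) hxr
    · intro y h h'
      have := phi_pos (hne hρ0 h) (h'.trans hr1)
      have := Phi_pos (hne hρ0 h)
      positivity
    · intro y h h'
      have := psi_pos (hne hρ0 h) (h'.trans hr1)
      have := Psi_pos hn (hne hρ0 h)
      positivity
    · intro y h h'
      rw [lap_add (hsc δ (hcd y h h').1) (hsc K (hcd y h h').2.2.1),
        lap_const_mul (hcd y h h').1, lap_const_mul (hcd y h h').2.2.1]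
      have a := mul_lt_mul_of_pos_left (phi_lap hn (hne hρ0 h) (h'.trans hr1)) hδ
      have b := mul_le_mul_of_nonneg_left (Phi_lap hn (hne hρ0 h)) hK0.le
      linarith
    · intro y h h'
      rw [lap_add (hsc δ (hcd y h h').2.1) (hsc K (hcd y h h').2.2.2),
        lap_const_mul (hcd y h h').2.1, lap_const_mul (hcd y h h').2.2.2]
      have hv := hV' y (hne hρ0 h) h'
      have a := mul_lt_mul_of_pos_left (psi_lap hn (hne hρ0 h) (h'.trans hr1) hv) hδ
      have b := mul_le_mul_of_nonneg_left (Psi_lap hn (hne hρ0 h) (h'.trans hr1) hv) hK0.le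
      linarith
    · intro y h
      have h0 : y ≠ 0 := hne hρ0 h.ge
      have a := h2 y h0 (h.le.trans hρa)
      have b := h3 y h0 (h.le.trans hρb)
      have c := mul_pos hK0 (Phi_pos h0)
      have d := mul_pos hK0 (Psi_pos hn h0)
      exact ⟨by linarith, by linarith⟩
    · intro y h
      have h0 : y ≠ 0 := hne hr h.ge
      have a := (le_abs_self _).trans (hB1 y ⟨h.ge, h.le⟩)
      have b := (le_abs_self _).trans (hB2 y ⟨h.ge, h.le⟩)
      have c := mul_pos hδ (phi_pos h0 (h.le.trans hr1))
      have d := mul_pos hδ (psi_pos h0 (h.le.trans hr1))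
      have e1 : Phi y = c1 := by unfold Phi; rw [h]
      have e2 : Psi y = c2 := by unfold Psi; rw [h]
      rw [e1, e2]
      exact ⟨by linarith, by linarith⟩
  have hp1 := phi_pos hx hxe
  have hp2 := psi_pos hx hxe
  constructor
  · refine le_of_forall_pos_le_add fun ε hε => ?_
    have := (key (ε / phi x) (by positivity)).1
    rw [div_mul_cancel₀ _ hp1.ne'] at this
    linarith
  · refine le_of_forall_pos_le_add fun ε hε => ?_
    have := (key (ε / psi x) (by positivity)).2
    rw [div_mul_cancel₀ _ hp2.ne'] at this
    linarith

lemma phi_compare (hn : 5 ≤ n) {x y : E n} (hx : x ≠ 0) (h : ‖x‖ ≤ Real.exp (-1))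
    (h1 : ‖x‖ / 2 ≤ ‖y‖) (h2 : ‖y‖ ≤ 3 / 2 * ‖x‖) :
    phi y ≤ (1/4 : ℝ) ^ ((4 - (n:ℝ)) / 2) * (1/2 : ℝ) ^ (-(1/4) : ℝ) * phi x := by
  have hn' : (5:ℝ) ≤ n := by exact_mod_cast hn
  have hxp : 0 < ‖x‖ := norm_pos_iff.mpr hx
  have hyp : 0 < ‖y‖ := by linarith
  have hτ := tau_ge hx h
  have he : Real.exp (-1) ≤ 4 / 9 := by
    have := Real.exp_one_gt_d9
    rw [Real.exp_neg, inv_le_comm₀ (Real.exp_pos _) (by norm_num)]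
    linarith
  have hlog : -Real.log (‖x‖ ^ 2) * (1/2) ≤ -Real.log (‖y‖ ^ 2) := by
    have : ‖y‖ ^ 2 ≤ ‖x‖ := by nlinarith
    have := Real.log_le_log (by positivity) this
    have e : Real.log (‖x‖ ^ 2) = 2 * Real.log ‖x‖ := by rw [Real.log_pow]; norm_num
    rw [e]; linarith
  unfold phi G
  have a1 : (‖y‖ ^ 2) ^ ((4 - (n:ℝ)) / 2) ≤
      (‖x‖ ^ 2) ^ ((4 - (n:ℝ)) / 2) * (1/4 : ℝ) ^ ((4 - (n:ℝ)) / 2) := by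
    rw [← Real.mul_rpow (by positivity) (by norm_num)]
    exact Real.rpow_le_rpow_of_nonpos (by positivity) (by nlinarith) (by linarith)
  have a2 : (-Real.log (‖y‖ ^ 2)) ^ (-(1/4) : ℝ) ≤
      (-Real.log (‖x‖ ^ 2)) ^ (-(1/4) : ℝ) * (1/2 : ℝ) ^ (-(1/4) : ℝ) := by
    rw [← Real.mul_rpow (by linarith) (by norm_num)]
    exact Real.rpow_le_rpow_of_nonpos (by linarith) hlog (by norm_num)
  calc _ ≤ _ := mul_le_mul a1 a2 (Real.rpow_nonneg (by linarith) _) (by positivity)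
    _ = _ := by ring

/-- decay of `w` from decay of `u`. -/
lemma w_decay (hn : 5 ≤ n) {r : ℝ} (hr : 0 < r) (hr1 : r ≤ Real.exp (-1)) {u w V : E n → ℝ}
    (hu : ∀ x, x ≠ 0 → ‖x‖ ≤ r → ContDiffAt ℝ 2 u x)
    (hw : ∀ x, x ≠ 0 → ‖x‖ ≤ r → ContDiffAt ℝ 2 w x)
    (hu0 : ∀ x, x ≠ 0 → ‖x‖ ≤ r → 0 ≤ u x)
    (hw0 : ∀ x, x ≠ 0 → ‖x‖ ≤ r → 0 ≤ w x)
    (hV : ∀ x, x ≠ 0 → ‖x‖ ≤ r → 0 ≤ V x)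
    (hV' : ∀ x, x ≠ 0 → ‖x‖ ≤ r → V x * (‖x‖ ^ 2) ^ 2 * (-Real.log (‖x‖ ^ 2)) ≤ 1 / n)
    (hlu : ∀ x, x ≠ 0 → ‖x‖ ≤ r → lap u x = - w x)
    (hlw : ∀ x, x ≠ 0 → ‖x‖ ≤ r → lap w x = - (V x * u x))
    (h2 : ∀ η > 0, ∃ ρ > 0, ∀ x : E n, x ≠ 0 → ‖x‖ ≤ ρ → u x ≤ η * phi x) :
    ∀ η > 0, ∃ ρ > 0, ∀ x : E n, x ≠ 0 → ‖x‖ ≤ ρ → w x ≤ η * psi x := by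
  intro η hη
  have hn' : (5:ℝ) ≤ n := by exact_mod_cast hn
  set C0 := (1/4 : ℝ) ^ ((4 - (n:ℝ)) / 2) * (1/2 : ℝ) ^ (-(1/4) : ℝ) with hC0
  have C0p : 0 < C0 := by positivity
  set D : ℝ := 17 / 16 + 8 * n * (64 * (n + 1)) ^ 2 with hD
  have Dp : 0 < D := by positivity
  set ε := η / (4 * D * C0) with hε
  have εp : 0 < ε := by positivity
  obtain ⟨ρ, hρ, h⟩ := h2 ε εp
  refine ⟨min (ρ / 2) (r / 2), lt_min (by linarith) (by linarith), ?_⟩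
  intro x hx hxm
  have hxρ : ‖x‖ ≤ ρ / 2 := hxm.trans (min_le_left _ _)
  have hxr : ‖x‖ ≤ r / 2 := hxm.trans (min_le_right _ _)
  have hxp : 0 < ‖x‖ := norm_pos_iff.mpr hx
  have hxe : ‖x‖ ≤ Real.exp (-1) := by linarith
  have hph := phi_pos hx hxe
  set M := ε * (C0 * phi x) with hM
  have Mp : 0 < M := by positivity
  have hball : ∀ z ∈ closedBall x (‖x‖ / 2), ‖x‖ / 2 ≤ ‖z‖ ∧ ‖z‖ ≤ 3 / 2 * ‖x‖ := by
    intro z hz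
    rw [mem_closedBall, dist_eq_norm] at hz
    have := norm_sub_norm_le z x
    have := norm_sub_norm_le x z
    rw [norm_sub_rev] at this
    constructor <;> linarith
  have hz0 : ∀ z ∈ closedBall x (‖x‖ / 2), z ≠ 0 := by
    intro z hz h0
    have := (hball z hz).1
    rw [h0, norm_zero] at this; linarith
  have hzr : ∀ z ∈ closedBall x (‖x‖ / 2), ‖z‖ ≤ r := fun z hz => by
    have := (hball z hz).2; linarith
  have huM : ∀ z ∈ closedBall x (‖x‖ / 2), u z ≤ M := by
    intro z hz
    have h1 := h z (hz0 z hz) (by have := (hball z hz).2; linarith)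
    have h2 := phi_compare hn hx hxe (hball z hz).1 (hball z hz).2
    have := mul_le_mul_of_nonneg_left h2 εp.le
    linarith
  have hlw' : ∀ z ∈ closedBall x (‖x‖ / 2), |lap w z| < 17 * M / ‖x‖ ^ 4 := by
    intro z hz
    have v0 := hV z (hz0 z hz) (hzr z hz)
    have v1 := hV' z (hz0 z hz) (hzr z hz)
    have u0 := hu0 z (hz0 z hz) (hzr z hz)
    have hτ := tau_ge (hz0 z hz) ((hzr z hz).trans hr1)
    rw [hlw z (hz0 z hz) (hzr z hz), abs_neg, abs_of_nonneg (by positivity), lt_div_iff₀ (by positivity)]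
    have hb := (hball z hz).1
    have hx4 : ‖x‖ ^ 4 ≤ 16 * (‖z‖ ^ 2) ^ 2 := by
      have : ‖x‖ ^ 4 ≤ (2 * ‖z‖) ^ 4 := pow_le_pow_left₀ hxp.le (by linarith) 4
      nlinarith
    have hn1 : 1 / (n:ℝ) ≤ 1 := by
      rw [div_le_one (by linarith)]; linarith
    have v2 : V z * (‖z‖ ^ 2) ^ 2 ≤ 1 := by
      have : 0 ≤ V z * (‖z‖ ^ 2) ^ 2 := by positivity
      nlinarith
    have v3 : V z * ‖x‖ ^ 4 ≤ 16 := by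
      have := mul_le_mul_of_nonneg_left hx4 v0
      linarith
    have v4 : V z * ‖x‖ ^ 4 * u z ≤ 16 * M :=
      mul_le_mul v3 (huM z hz) u0 (by norm_num)
    linarith
  have hI := interior hn (u := u) (w := w) (x₀ := x) (R := ‖x‖ / 2) (M := M)
    (F := 17 * M / ‖x‖ ^ 4) (by linarith) (by positivity) hz0
    (fun z hz => hu z (hz0 z hz) (hzr z hz)) (fun z hz => hw z (hz0 z hz) (hzr z hz))
    (fun z hz => hu0 z (hz0 z hz) (hzr z hz)) huM
    (fun z hz => hw0 z (hz0 z hz) (hzr z hz))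
    (fun z hz => hlu z (hz0 z hz) (hzr z hz)) hlw'
  have e1 : 17 * M / ‖x‖ ^ 4 * (‖x‖ / 2) ^ 4 = 17 / 16 * M := by
    field_simp; norm_num
  rw [e1] at hI
  have e2 : w x * ‖x‖ ^ 2 ≤ η * psi x * ‖x‖ ^ 2 := by
    have : 4 * D * M = η * phi x := by
      rw [hM, hε]; field_simp
    rw [psi_eq hx] at this
    have h4 : D * M = 17 / 16 * M + 8 * n * (64 * (n + 1)) ^ 2 * M := by rw [hD]; ring
    nlinarith
  exact le_of_mul_le_mul_right e2 (by positivity)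

end Serrin

namespace Serrin

variable {n : ℕ}

lemma V_small (hn : 5 ≤ n) {r t v : ℝ} (hr : 0 < r) (ht : 0 ≤ t) (hv : 0 ≤ v)
    (h : r ^ ((n:ℝ) - 4) * t ^ (((n:ℝ) - 4) / 4) * v ≤ (1 / (2 * n) : ℝ) ^ (((n:ℝ) - 4) / 4)) :
    v ^ (4 / ((n:ℝ) - 4)) * (r ^ 2) ^ 2 * (2 * t) ≤ 1 / n := by
  have hn' : (5:ℝ) ≤ n := by exact_mod_cast hn
  have h4 : (n:ℝ) - 4 ≠ 0 := by linarith
  have h5 : 0 < 4 / ((n:ℝ) - 4) := div_pos (by norm_num) (by linarith)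
  have := Real.rpow_le_rpow (by positivity) h h5.le
  rw [Real.mul_rpow (by positivity) hv, Real.mul_rpow (by positivity) (by positivity),
    ← Real.rpow_mul hr.le, ← Real.rpow_mul ht, ← Real.rpow_mul (by positivity)] at this
  have e1 : ((n:ℝ) - 4) * (4 / ((n:ℝ) - 4)) = ((4:ℕ):ℝ) := by field_simp; norm_num
  have e2 : ((n:ℝ) - 4) / 4 * (4 / ((n:ℝ) - 4)) = 1 := by field_simp
  rw [e1, e2, Real.rpow_one, Real.rpow_one, Real.rpow_natCast] at this
  have e3 : 1 / (2 * (n:ℝ)) * 2 = 1 / n := by field_simp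
  nlinarith

lemma v_le_phi (hn : 5 ≤ n) {x : E n} {v η : ℝ} (hx : x ≠ 0) (h : ‖x‖ ≤ Real.exp (-1))
    (hη : 0 ≤ η)
    (hT : ‖x‖ ^ ((n:ℝ) - 4) * (-Real.log ‖x‖) ^ (((n:ℝ) - 4) / 4) * v ≤ η) :
    v ≤ 2 * η * phi x := by
  have hn' : (5:ℝ) ≤ n := by exact_mod_cast hn
  have hxp : 0 < ‖x‖ := norm_pos_iff.mpr hx
  have e : Real.log (‖x‖ ^ 2) = 2 * Real.log ‖x‖ := by rw [Real.log_pow]; norm_num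
  have hτ := tau_ge hx h
  set t := -Real.log ‖x‖ with ht
  have ht1 : 1 ≤ t := by linarith
  have htp : 0 < t := by linarith
  have eφ : phi x = ‖x‖ ^ (4 - (n:ℝ)) * (2 * t) ^ (-(1/4) : ℝ) := by
    unfold phi G
    rw [normsq_rpow, e]
    congr 2
    · ring
    · rw [ht]; ring
  have a1 : t ^ ((1/4) : ℝ) ≤ t ^ (((n:ℝ) - 4) / 4) :=
    Real.rpow_le_rpow_of_exponent_le ht1 (by linarith)
  have a2 : (2:ℝ) ^ ((1/4) : ℝ) ≤ 2 := by
    nth_rw 2 [← Real.rpow_one 2]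
    exact Real.rpow_le_rpow_of_exponent_le (by norm_num) (by norm_num)
  set a := ‖x‖ ^ ((n:ℝ) - 4) with ha
  have hap : 0 < a := by positivity
  have ea : ‖x‖ ^ (4 - (n:ℝ)) = a⁻¹ := by
    rw [ha, ← Real.rpow_neg hxp.le]; congr 1; ring
  have eb : (2 * t) ^ (-(1/4) : ℝ) = ((2:ℝ) ^ ((1/4) : ℝ) * t ^ ((1/4) : ℝ))⁻¹ := by
    rw [Real.rpow_neg (by positivity), Real.mul_rpow (by norm_num) htp.le]
  rw [eφ, ea, eb]
  set b := t ^ ((1/4) : ℝ) with hb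
  set d := (2:ℝ) ^ ((1/4) : ℝ) with hd
  have hbp : 0 < b := by positivity
  have hdp : 0 < d := by positivity
  rcases le_or_gt v 0 with hv | hv
  · exact hv.trans (by positivity)
  have h1 : a * b * v ≤ η := by
    refine le_trans ?_ hT
    gcongr
  rw [← mul_inv, ← div_eq_mul_inv, le_div_iff₀ (by positivity)]
  calc v * (a * (d * b)) = d * (a * b * v) := by ring
    _ ≤ 2 * η := mul_le_mul a2 h1 (by positivity) (by norm_num)

/-- From the power bound to continuity: each of several functions. -/
lemma bounded_of_decay (hn : 5 ≤ n) {r : ℝ} (hr : 0 < r) (hr1 : r ≤ Real.exp (-1))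
    {u w V : E n → ℝ} {v : E n → ℝ} {s : ℝ} (hs : s = (n:ℝ) / ((n:ℝ) - 4))
    (hu : ∀ x, x ≠ 0 → ‖x‖ ≤ r → ContDiffAt ℝ 2 u x)
    (hw : ∀ x, x ≠ 0 → ‖x‖ ≤ r → ContDiffAt ℝ 2 w x)
    (hu0 : ∀ x, x ≠ 0 → ‖x‖ ≤ r → 0 ≤ u x)
    (hw0 : ∀ x, x ≠ 0 → ‖x‖ ≤ r → 0 ≤ w x)
    (hv0 : ∀ x, 0 ≤ v x)
    (hvu : ∀ x, x ≠ 0 → ‖x‖ ≤ r → v x ≤ u x)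
    (hVv : ∀ x, V x = v x ^ (s - 1))
    (hV' : ∀ x, x ≠ 0 → ‖x‖ ≤ r → V x * (‖x‖ ^ 2) ^ 2 * (-Real.log (‖x‖ ^ 2)) ≤ 1 / n)
    (hlu : ∀ x, x ≠ 0 → ‖x‖ ≤ r → lap u x = - w x)
    (hlw : ∀ x, x ≠ 0 → ‖x‖ ≤ r → lap w x = - (V x * u x))
    (h2 : ∀ η > 0, ∃ ρ > 0, ∀ x : E n, x ≠ 0 → ‖x‖ ≤ ρ → u x ≤ η * phi x) :
    ∃ M F, 0 ≤ M ∧ 0 ≤ F ∧ ∀ x, x ≠ 0 → ‖x‖ ≤ r → u x ≤ M ∧ w x ≤ F := by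
  have hn' : (5:ℝ) ≤ n := by exact_mod_cast hn
  have hV : ∀ x, x ≠ 0 → ‖x‖ ≤ r → 0 ≤ V x := fun x _ _ => by
    rw [hVv]; exact Real.rpow_nonneg (hv0 x) _
  have h3 := w_decay hn hr hr1 hu hw hu0 hw0 hV hV' hlu hlw h2
  obtain ⟨K, hK, hb⟩ := power_bound hn hr hr1 hu hw hV hV' hlu hlw h2 h3
  have hr2 : r ≤ 1 := hr1.trans (Real.exp_le_one_iff.mpr (by norm_num))
  have hn5 : 1 / (n:ℝ) ≤ 1 / 5 := one_div_le_one_div_of_le (by norm_num) hn'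
  have hn0 : 0 < 1 / (n:ℝ) := by positivity
  have ePhi : ∀ x : E n, Phi x = ‖x‖ ^ (-(1 / (n:ℝ))) := by
    intro x; unfold Phi; rw [normsq_rpow]; congr 1; field_simp
  have ePsi : ∀ x : E n, Psi x = 1 / n * ‖x‖ ^ (-(1 / (n:ℝ)) - 2) := by
    intro x; unfold Psi; rw [normsq_rpow]; congr 2; field_simp
  have hs1 : 0 ≤ s - 1 := by
    rw [hs, sub_nonneg, le_div_iff₀ (by linarith)]; linarith
  have hs0 : 0 < s := by linarith
  have hVu : ∀ x, x ≠ 0 → ‖x‖ ≤ r → V x * u x ≤ K ^ s / ‖x‖ := by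
    intro x hx hxr
    have hxp : 0 < ‖x‖ := norm_pos_iff.mpr hx
    have u0 := hu0 x hx hxr
    have a1 : V x * u x ≤ u x ^ s := by
      rw [hVv]
      calc v x ^ (s - 1) * u x ≤ u x ^ (s - 1) * u x := by
            gcongr
            · exact hv0 x
            · exact hvu x hx hxr
        _ = u x ^ s := by
          nth_rw 2 [← Real.rpow_one (u x)]
          rw [← Real.rpow_add_of_nonneg u0 hs1 (by norm_num)]; congr 1; ring
    have a2 : u x ^ s ≤ K ^ s * ‖x‖ ^ (-(1 / ((n:ℝ) - 4))) := by
      have := Real.rpow_le_rpow u0 (hb x hx hxr).1 hs0.le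
      rw [ePhi, Real.mul_rpow hK (by positivity), ← Real.rpow_mul hxp.le] at this
      have e : -(1 / (n:ℝ)) * s = -(1 / ((n:ℝ) - 4)) := by
        rw [hs]
        have : (n:ℝ) - 4 ≠ 0 := by linarith
        field_simp
      rwa [e] at this
    have a3 : ‖x‖ ^ (-(1 / ((n:ℝ) - 4))) ≤ ‖x‖⁻¹ := by
      rw [← Real.rpow_neg_one]
      apply Real.rpow_le_rpow_of_exponent_ge hxp (by linarith)
      have : 1 / ((n:ℝ) - 4) ≤ 1 := by
        rw [div_le_one (by linarith)]; linarith
      linarith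
    have := mul_le_mul_of_nonneg_left a3 (Real.rpow_nonneg hK s)
    rw [div_eq_mul_inv]; linarith
  obtain ⟨F, hF, hwF⟩ := scalar_bound hn (v := w) (r := r) (K := K) (C := K ^ s) hr hr2 hK
    (Real.rpow_nonneg hK s) hw
    (fun x hx hxr => by rw [hlw x hx hxr]; linarith [hVu x hx hxr])
    (fun x hx hxr => by
      have hxp : 0 < ‖x‖ := norm_pos_iff.mpr hx
      refine (hb x hx hxr).2.trans (mul_le_mul_of_nonneg_left ?_ hK)
      rw [ePsi]
      have : ‖x‖ ^ (-(1 / (n:ℝ)) - 2) ≤ ‖x‖ ^ (-(5/2) : ℝ) :=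
        Real.rpow_le_rpow_of_exponent_ge hxp (by linarith) (by linarith)
      have h0 : 0 < ‖x‖ ^ (-(1 / (n:ℝ)) - 2) := by positivity
      nlinarith)
  obtain ⟨M, hM, huM⟩ := scalar_bound hn (v := u) (r := r) (K := K) (C := F) hr hr2 hK hF hu
    (fun x hx hxr => by
      have hxp : 0 < ‖x‖ := norm_pos_iff.mpr hx
      rw [hlu x hx hxr]
      have : F ≤ F / ‖x‖ := by
        rw [le_div_iff₀ hxp]; nlinarith
      linarith [hwF x hx hxr])
    (fun x hx hxr => by
      have hxp : 0 < ‖x‖ := norm_pos_iff.mpr hx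
      refine (hb x hx hxr).1.trans (mul_le_mul_of_nonneg_left ?_ hK)
      rw [ePhi]
      exact Real.rpow_le_rpow_of_exponent_ge hxp (by linarith) (by linarith))
  exact ⟨M, F, hM, hF, fun x hx hxr => ⟨huM x hx hxr, hwF x hx hxr⟩⟩

/-- removable singularity for a bounded function with bounded Laplacian -/
lemma extend (hn : 5 ≤ n) {r M F : ℝ} (hr : 0 < r) (hM : 0 ≤ M) (hF : 0 ≤ F)
    {f : E n → ℝ} (hf : ∀ x, x ≠ 0 → ‖x‖ ≤ r → ContDiffAt ℝ 2 f x)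
    (hfM : ∀ x, x ≠ 0 → ‖x‖ ≤ r → 0 ≤ f x ∧ f x ≤ M)
    (hfF : ∀ x, x ≠ 0 → ‖x‖ ≤ r → |lap f x| < F)
    (hc : ∀ x ∈ ball (0 : E n) 1 \ {0}, ContinuousAt f x) :
    ∃ g : E n → ℝ, ContinuousOn g (ball (0 : E n) 1) ∧
      ∀ x ∈ ball (0 : E n) 1 \ {0}, g x = f x := by
  set L := ((n+1)*M/(r/2) + F*(r/2)) with hL
  have hL0 : 0 ≤ L := by positivity
  have key : ∀ x ∈ ball (0 : E n) (r/4) \ {0}, ∀ y ∈ ball (0 : E n) (r/4) \ {0},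
      f x - f y ≤ L * ‖x - y‖ := by
    intro x hx y hy
    have hx1 : ‖x‖ < r / 4 := by simpa using hx.1
    have hy1 : ‖y‖ < r / 4 := by simpa using hy.1
    have hb : ∀ z ∈ closedBall ((2:ℝ)⁻¹ • (x+y)) (r/2), ‖z‖ ≤ r := by
      intro z hz
      rw [mem_closedBall, dist_eq_norm] at hz
      have h1 := norm_sub_norm_le z ((2:ℝ)⁻¹ • (x+y))
      have h2 : ‖(2:ℝ)⁻¹ • (x+y)‖ = 2⁻¹ * ‖x + y‖ := by
        rw [norm_smul]; norm_num
      have h3 := norm_add_le x y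
      linarith
    have h := lip2 hn (v := f) (x := x) (y := y) (r := r/2) (N := M) (F := F) (by linarith)
      (by have := norm_sub_le x y; linarith) hM hF
      (fun z hz h0 => hf z h0 (hb z hz)) (fun z hz h0 => hfM z h0 (hb z hz))
      (fun z hz h0 => hfF z h0 (hb z hz)) hx.2 hy.2
    have : 0 ≤ L * ‖x - y‖ := by positivity
    have e : L * (‖x - y‖ / 2) = L * ‖x - y‖ / 2 := by ring
    rw [← hL, e] at h
    linarith
  have hLip : LipschitzOnWith (Real.toNNReal L) f (ball (0 : E n) (r/4) \ {0}) := by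
    apply LipschitzOnWith.of_dist_le_mul
    intro x hx y hy
    rw [Real.coe_toNNReal _ hL0, dist_eq_norm, dist_eq_norm, Real.norm_eq_abs, abs_le]
    have h1 := key x hx y hy
    have h2 := key y hy x hx
    rw [norm_sub_rev y x] at h2
    constructor <;> linarith
  obtain ⟨g, hg, hgf⟩ := hLip.extend_real
  classical
  refine ⟨fun x => if x = 0 then g 0 else f x, ?_, ?_⟩
  · intro x hx
    apply ContinuousAt.continuousWithinAt
    by_cases h0 : x = 0
    · subst h0
      have : (fun x => if x = 0 then g 0 else f x) =ᶠ[𝓝 0] g := by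
        filter_upwards [ball_mem_nhds (0 : E n) (show (0:ℝ) < r / 4 by linarith)] with y hy
        by_cases hy0 : y = 0
        · simp [hy0]
        · simp only [hy0, if_false]
          exact hgf ⟨hy, hy0⟩
      exact hg.continuous.continuousAt.congr this.symm
    · have : (fun x => if x = 0 then g 0 else f x) =ᶠ[𝓝 x] f := by
        filter_upwards [isOpen_ne.mem_nhds h0] with y hy
        simp [show y ≠ 0 from hy]
      exact (hc x ⟨hx, h0⟩).congr this.symm
  · intro x hx
    have : x ≠ 0 := hx.2
    simp [this]

end Serrin

/-- removability of the singularity at the Serrin exponent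
`s = n/(n-4)` when `|U(x)| = o(|x|^{4-n} (-ln|x|)^{(4-n)/4})` as `x → 0`. -/
theorem statement19 (n p : ℕ) (hn : 5 ≤ n) (hp : 1 ≤ p) (s : ℝ)
    (hs : s = (n : ℝ) / ((n : ℝ) - 4))
    (U : Fin p → EuclideanSpace ℝ (Fin n) → ℝ)
    (hnonneg : ∀ i, ∀ x ∈ Metric.ball (0 : EuclideanSpace ℝ (Fin n)) 1 \ {0}, 0 ≤ U i x)
    (hC4 : ∀ i, ContDiffOn ℝ 4 (U i)
      (Metric.ball (0 : EuclideanSpace ℝ (Fin n)) 1 \ {0}))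
    (hsuper : ∀ i, ∀ x ∈ Metric.ball (0 : EuclideanSpace ℝ (Fin n)) 1 \ {0},
      0 < -lap (U i) x)
    (hpde : ∀ i, ∀ x ∈ Metric.ball (0 : EuclideanSpace ℝ (Fin n)) 1 \ {0},
      bilap (U i) x = (vnorm U x) ^ (s - 1) * U i x)
    (hlittleo : Tendsto
      (fun x : EuclideanSpace ℝ (Fin n) =>
        ‖x‖ ^ ((n : ℝ) - 4) * (-Real.log ‖x‖) ^ (((n : ℝ) - 4) / 4) * vnorm U x)
      (𝓝[Metric.ball (0 : EuclideanSpace ℝ (Fin n)) 1 \ {0}] 0) (𝓝 0)) :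
    ∀ i, ∃ g : EuclideanSpace ℝ (Fin n) → ℝ,
      ContinuousOn g (Metric.ball (0 : EuclideanSpace ℝ (Fin n)) 1) ∧
      ∀ x ∈ Metric.ball (0 : EuclideanSpace ℝ (Fin n)) 1 \ {0}, g x = U i x := by
  have hn' : (5:ℝ) ≤ n := by exact_mod_cast hn
  have hp' : (1:ℝ) ≤ p := by exact_mod_cast hp
  have hopen : IsOpen (Metric.ball (0 : EuclideanSpace ℝ (Fin n)) 1 \ {0}) :=
    isOpen_ball.sdiff isClosed_singleton
  have hcd : ∀ i, ∀ x ∈ Metric.ball (0 : EuclideanSpace ℝ (Fin n)) 1 \ {0},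
      ContDiffAt ℝ 4 (U i) x := fun i x hx => (hC4 i).contDiffAt (hopen.mem_nhds hx)
  have hcd2 : ∀ i, ∀ x ∈ Metric.ball (0 : EuclideanSpace ℝ (Fin n)) 1 \ {0},
      ContDiffAt ℝ 2 (U i) x := fun i x hx => (hcd i x hx).of_le (by norm_num)
  have hcdl : ∀ i, ∀ x ∈ Metric.ball (0 : EuclideanSpace ℝ (Fin n)) 1 \ {0},
      ContDiffAt ℝ 2 (fun y => -lap (U i) y) x := fun i x hx =>
    (Serrin.contDiffAt_lap (hcd i x hx)).neg
  have hv0 : ∀ x, 0 ≤ vnorm U x := fun x => Real.sqrt_nonneg _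
  have hUv : ∀ i x, U i x ≤ vnorm U x := by
    intro i x
    apply Real.le_sqrt_of_sq_le
    exact Finset.single_le_sum (f := fun j => U j x ^ 2) (fun j _ => sq_nonneg _) (Finset.mem_univ i)
  have hT : ∀ η > 0, ∃ ρ > 0, ∀ x : EuclideanSpace ℝ (Fin n), x ≠ 0 → ‖x‖ ≤ ρ →
      ‖x‖ ≤ Real.exp (-1) ∧
      ‖x‖ ^ ((n : ℝ) - 4) * (-Real.log ‖x‖) ^ (((n : ℝ) - 4) / 4) * vnorm U x ≤ η := by
    intro η hη
    have h1 := hlittleo.eventually (gt_mem_nhds hη)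
    rw [eventually_nhdsWithin_iff, Metric.eventually_nhds_iff] at h1
    obtain ⟨ε, hε, h⟩ := h1
    refine ⟨min (ε / 2) (Real.exp (-1)), lt_min (by linarith) (Real.exp_pos _), ?_⟩
    intro x hx hxm
    have ha : ‖x‖ ≤ ε / 2 := hxm.trans (min_le_left _ _)
    have hb : ‖x‖ ≤ Real.exp (-1) := hxm.trans (min_le_right _ _)
    refine ⟨hb, (h (by rw [dist_zero_right]; linarith) ⟨?_, hx⟩).le⟩
    rw [mem_ball_zero_iff]
    exact Serrin.lt_one_of_le_exp hb
  obtain ⟨r, hr, hrT⟩ := hT ((1 / (2 * n) : ℝ) ^ (((n:ℝ) - 4) / 4)) (by positivity)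
  -- shrink the radius
  obtain ⟨R, hR, hRr, hRe⟩ : ∃ R > 0, R ≤ r ∧ R ≤ Real.exp (-1) :=
    ⟨min r (Real.exp (-1)), lt_min hr (Real.exp_pos _), min_le_left _ _, min_le_right _ _⟩
  have hmem : ∀ x : EuclideanSpace ℝ (Fin n), x ≠ 0 → ‖x‖ ≤ R →
      x ∈ Metric.ball (0 : EuclideanSpace ℝ (Fin n)) 1 \ {0} := fun x hx hxR =>
    ⟨by rw [mem_ball_zero_iff]; exact Serrin.lt_one_of_le_exp (hxR.trans hRe), hx⟩
  have hs4 : s - 1 = 4 / ((n:ℝ) - 4) := by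
    have : (n:ℝ) - 4 ≠ 0 := by linarith
    rw [hs]; field_simp; ring
  have hVs : ∀ x : EuclideanSpace ℝ (Fin n), x ≠ 0 → ‖x‖ ≤ R →
      vnorm U x ^ (s - 1) * (‖x‖ ^ 2) ^ 2 * (-Real.log (‖x‖ ^ 2)) ≤ 1 / n := by
    intro x hx hxR
    have hτ := Serrin.tau_ge hx (hxR.trans hRe)
    have e : -Real.log (‖x‖ ^ 2) = 2 * (-Real.log ‖x‖) := by rw [Real.log_pow]; push_cast; ring
    rw [e] at hτ
    rw [e, hs4]
    exact Serrin.V_small hn (norm_pos_iff.mpr hx) (by linarith) (hv0 x)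
      (hrT x hx (hxR.trans hRr)).2
  have hlw : ∀ x : EuclideanSpace ℝ (Fin n), x ≠ 0 → ‖x‖ ≤ R →
      lap (fun y => ∑ i, -lap (U i) y) x = -(vnorm U x ^ (s - 1) * ∑ i, U i x) := by
    intro x hx hxR
    rw [Serrin.lap_sum (fun i => hcdl i x (hmem x hx hxR)), Finset.mul_sum, ← Finset.sum_neg_distrib]
    refine Finset.sum_congr rfl fun i _ => ?_
    rw [Serrin.lap_neg (Serrin.contDiffAt_lap (hcd i x (hmem x hx hxR)))]
    rw [← hpde i x (hmem x hx hxR)]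
    rfl
  have hvu : ∀ x : EuclideanSpace ℝ (Fin n), x ≠ 0 → ‖x‖ ≤ R → vnorm U x ≤ ∑ i, U i x := by
    intro x hx hxR
    have h0 : ∀ i, 0 ≤ U i x := fun i => hnonneg i x (hmem x hx hxR)
    apply Real.sqrt_le_iff.mpr
    refine ⟨Finset.sum_nonneg fun i _ => h0 i, ?_⟩
    exact Finset.sum_sq_le_sq_sum_of_nonneg fun i _ => h0 i
  have h2 : ∀ η > 0, ∃ ρ > 0, ∀ x : EuclideanSpace ℝ (Fin n), x ≠ 0 → ‖x‖ ≤ ρ →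
      ∑ i, U i x ≤ η * Serrin.phi x := by
    intro η hη
    obtain ⟨ρ, hρ, h⟩ := hT (η / (2 * p)) (by positivity)
    refine ⟨ρ, hρ, fun x hx hxρ => ?_⟩
    obtain ⟨ha, hb⟩ := h x hx hxρ
    have h1 := Serrin.v_le_phi hn hx ha (by positivity) hb
    have h3 : ∑ i, U i x ≤ p * vnorm U x := by
      have := Finset.sum_le_card_nsmul (Finset.univ : Finset (Fin p)) (fun i => U i x) (vnorm U x)
        (fun i _ => hUv i x)
      simpa using this
    calc ∑ i, U i x ≤ p * vnorm U x := h3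
      _ ≤ p * (2 * (η / (2 * p)) * Serrin.phi x) := by gcongr
      _ = η * Serrin.phi x := by field_simp
  obtain ⟨M, F, hM, hF, hb⟩ := Serrin.bounded_of_decay hn hR hRe (u := fun x => ∑ i, U i x)
    (w := fun x => ∑ i, -lap (U i) x) (V := fun x => vnorm U x ^ (s - 1)) (v := vnorm U) hs
    (fun x hx hxR => ContDiffAt.sum fun i _ => hcd2 i x (hmem x hx hxR))
    (fun x hx hxR => ContDiffAt.sum fun i _ => hcdl i x (hmem x hx hxR))
    (fun x hx hxR => Finset.sum_nonneg fun i _ => hnonneg i x (hmem x hx hxR))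
    (fun x hx hxR => Finset.sum_nonneg fun i _ => (hsuper i x (hmem x hx hxR)).le)
    hv0 hvu (fun _ => rfl) hVs
    (fun x hx hxR => by
      rw [Serrin.lap_sum (fun i => hcd2 i x (hmem x hx hxR)), Finset.sum_neg_distrib, neg_neg])
    hlw h2
  intro i
  refine Serrin.extend hn hR hM (show 0 ≤ F + 1 by linarith)
    (fun x hx hxR => hcd2 i x (hmem x hx hxR)) ?_ ?_ (fun x hx => (hcd2 i x hx).continuousAt)
  · intro x hx hxR
    refine ⟨hnonneg i x (hmem x hx hxR), le_trans ?_ (hb x hx hxR).1⟩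
    exact Finset.single_le_sum (f := fun j => U j x)
      (fun j _ => hnonneg j x (hmem x hx hxR)) (Finset.mem_univ i)
  · intro x hx hxR
    have h1 := hsuper i x (hmem x hx hxR)
    rw [abs_of_neg (by linarith)]
    have h3 : -lap (U i) x ≤ ∑ j, -lap (U j) x :=
      Finset.single_le_sum (f := fun j => -lap (U j) x)
        (fun j _ => (hsuper j x (hmem x hx hxR)).le) (Finset.mem_univ i)
    have h4 := (hb x hx hxR).2
    linarith
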